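/- arXiv:1312.0101 — 2 statements merged into one kernel-verified Lean document; each statement's English description precedes it below -/
import Mathlib

section
/- Let ω and φ be as in the context. Then c φ(0) ≤ −φ(1) ≤ C φ(0) for constants c, C > 0 depending only on n, and for every δ ∈ (0, 1/2) there is a constant c_δ > 0 (depending only on n and δ) such that −φ'(x) ≥ c_δ φ(0) for all x with δ ≤ x ≤ 1 − δ. -/
open MeasureTheory Set Filter Topology RealInnerProductSpace

noncomputable section

/-- The point `(x, y) ∈ ℝ × ℝ^m ≅ ℝ^{m+1}`. -/
def mkPt (m : ℕ) (x : ℝ) (y : EuclideanSpace ℝ (Fin m)) : EuclideanSpace ℝ (Fin (m+1)) :=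
  (EuclideanSpace.equiv (Fin (m+1)) ℝ).symm (Fin.cons x ((EuclideanSpace.equiv (Fin m) ℝ) y))

/-- The cross-section `Ω(s) = {y : (s, y) ∈ Ω}`. -/
def cross {m : ℕ} (Ω : Set (EuclideanSpace ℝ (Fin (m+1)))) (s : ℝ) :
    Set (EuclideanSpace ℝ (Fin m)) := {y | mkPt m s y ∈ Ω}

/-- `ω(s)`: the (n-1)-dimensional volume of the cross-section `Ω(s)`. -/
def ωvol {m : ℕ} (Ω : Set (EuclideanSpace ℝ (Fin (m+1)))) (s : ℝ) : ℝ :=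
  (volume (cross Ω s)).toReal

/-- The Laplacian, as the sum of the pure second derivatives along the standard basis. -/
def lap {k : ℕ} (u : EuclideanSpace ℝ (Fin k) → ℝ) (p : EuclideanSpace ℝ (Fin k)) : ℝ :=
  ∑ i, fderiv ℝ (fun q => fderiv ℝ u q (EuclideanSpace.single i 1)) p (EuclideanSpace.single i 1)

/-- The cross-sectional average `ū(x)` of `u`. -/
def ubarFn {m : ℕ} (Ω : Set (EuclideanSpace ℝ (Fin (m+1))))
    (u : EuclideanSpace ℝ (Fin (m+1)) → ℝ) (x : ℝ) : ℝ :=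
  (∫ y in cross Ω x, u (mkPt m x y)) / ωvol Ω x

/-- `(φ, φd)` is a (nonzero, C¹ on [0,1]) solution of the Neumann problem
`-(ω φ')' = μ ω φ` on (0,1), with `φ'(0) = φ'(1) = 0`. -/
def NeumannSol (ω : ℝ → ℝ) (μ : ℝ) (φ φd : ℝ → ℝ) : Prop :=
  (∀ x ∈ Icc (0:ℝ) 1, HasDerivWithinAt φ (φd x) (Icc 0 1) x) ∧
  ContinuousOn φd (Icc 0 1) ∧ φd 0 = 0 ∧ φd 1 = 0 ∧
  (∃ x ∈ Icc (0:ℝ) 1, φ x ≠ 0) ∧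
  ∀ x ∈ Ioo (0:ℝ) 1, HasDerivAt (fun t => ω t * φd t) (-(μ * ω x * φ x)) x

/-- `μ` is a Neumann eigenvalue of `-(ω φ')' = μ ω φ`. -/
def IsNeumannEigenvalue (ω : ℝ → ℝ) (μ : ℝ) : Prop := ∃ φ φd, NeumannSol ω μ φ φd

/-!
Write `w` for the cross-sectional volume. Comparing a section with the cone over it gives, for
`s ≤ t`, the bounds `w s (1 - t)^m ≤ w t (1 - s)^m` and `w t s^m ≤ w s t^m`, which are all that is
used of convexity. They control `-φ'(x) / μ = (∫₀ˣ w φ) / w x` above and below.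

`φ'` has no zero inside `(0, 1)`. Solutions satisfying the Neumann condition at one endpoint are
obtained for every spectral parameter `l` by inverting `1 + l V`, where the powers of the Volterra
operator `V` decay factorially; hence they depend continuously on `l`. Shoot in this way from both
endpoints to an interior point `z`. The two solutions can be glued when a determinant `D(l)` in
their values and fluxes at `z` vanishes, and `D(0) > 0`. At the first `l` where a flux vanishes,
Green's identity, applied to this solution and to one with slightly smaller parameter, shows that
the value of the solution at `z` is negative; so `D` becomes negative there or just before. If
`φ'(z) = 0`, then the left flux vanishes at `l = μ`, and the intermediate value theorem produces a
Neumann eigenvalue in `(0, μ)`, contradicting minimality.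

Thus `φ` decreases, and it keeps half of `φ 0` on an initial interval whose length depends only on
`m` and the upper bound for `μ`. The weight bounds propagate this into the lower bound for `-φ'` as
long as `φ ≥ 0`, and comparing the flux computed from the left with the one computed from the right
gives `-φ 1 ≳ φ 0`. The reflection `x ↦ 1 - x` exchanges `φ` and `-φ`; it covers the points where
`φ ≤ 0` and the remaining comparison of the endpoint values.
-/

theorem isUnit_one_sub_of_norm_pow_lt_one {R : Type*} [NormedRing R] [HasSummableGeomSeries R]
    {x : R} {n : ℕ} (h : ‖x ^ n‖ < 1) : IsUnit (1 - x) := by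
  have hcomm : Commute (1 - x) (∑ i ∈ Finset.range n, x ^ i) :=
    (mul_neg_geom_sum x n).trans (geom_sum_mul_neg x n).symm
  refine (hcomm.isUnit_mul_iff.1 ?_).1
  rw [mul_neg_geom_sum]
  exact (Units.oneSub (x ^ n) h).isUnit

theorem isUnit_one_add_smul_of_norm_pow_le {𝕜 R : Type*} [NormedField 𝕜] [NormedRing R]
    [HasSummableGeomSeries R] [NormedAlgebra 𝕜 R] {x : R} {C : ℝ}
    (hx : ∀ n : ℕ, ‖x ^ n‖ ≤ C ^ n / n.factorial) (l : 𝕜) : IsUnit (1 + l • x) := by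
  obtain ⟨n, hn⟩ := ((FloorSemiring.tendsto_pow_div_factorial_atTop (‖l‖ * C)).eventually
    (gt_mem_nhds one_pos)).exists
  have hnorm : ‖(-l • x) ^ n‖ < 1 :=
    calc ‖(-l • x) ^ n‖ ≤ ‖l‖ ^ n * ‖x ^ n‖ := by
          rw [smul_pow, ← norm_neg l, ← norm_pow]
          exact norm_smul_le _ _
      _ ≤ ‖l‖ ^ n * (C ^ n / n.factorial) := by gcongr; exact hx n
      _ = (‖l‖ * C) ^ n / n.factorial := by rw [mul_pow, mul_div_assoc]
      _ < 1 := hn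
  simpa using isUnit_one_sub_of_norm_pow_lt_one hnorm

theorem exists_Icc_forall_pos {f : ℝ → ℝ} {a b : ℝ} (hab : a < b) (hf : ContinuousOn f (Icc a b))
    (ha : 0 < f a) : ∃ d ∈ Ioc a b, ∀ x ∈ Icc a d, 0 < f x := by
  have hpos : {x | 0 < f x} ∈ 𝓝[≥] a := by
    rw [← nhdsWithin_Icc_eq_nhdsGE hab]
    exact (hf a (left_mem_Icc.2 hab.le)).eventually (lt_mem_nhds ha)
  obtain ⟨u, hau, hu⟩ := mem_nhdsGE_iff_exists_Icc_subset.1 hpos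
  exact ⟨min u b, ⟨lt_min hau hab, min_le_right u b⟩,
    fun x hx => hu ⟨hx.1, hx.2.trans (min_le_left u b)⟩⟩

theorem exists_first_zero {f : ℝ → ℝ} {a b : ℝ} (hab : a ≤ b) (hf : ContinuousOn f (Icc a b))
    (ha : 0 < f a) (hb : f b ≤ 0) : ∃ s ∈ Ioc a b, f s = 0 ∧ ∀ t ∈ Ico a s, 0 < f t := by
  have hclosed : IsClosed (Icc a b ∩ f ⁻¹' Iic 0) := hf.preimage_isClosed_of_isClosed isClosed_Icc
    isClosed_Iic
  obtain ⟨s, ⟨hsI, hs⟩, hleast⟩ := (isCompact_Icc.of_isClosed_subset hclosed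
    inter_subset_left).exists_isLeast ⟨b, right_mem_Icc.2 hab, hb⟩
  have hpos : ∀ t ∈ Ico a s, 0 < f t := fun t ht => by
    by_contra! hft
    exact ht.2.not_ge (hleast ⟨⟨ht.1, ht.2.le.trans hsI.2⟩, hft⟩)
  have has : a < s := hsI.1.lt_of_ne fun h => (h ▸ ha).not_ge hs
  obtain ⟨t, ht, hft⟩ := intermediate_value_Icc' has.le (hf.mono (Icc_subset_Icc_right hsI.2))
    ⟨hs, ha.le⟩
  obtain rfl : t = s := ht.2.eq_of_not_lt fun h => (hpos t ⟨ht.1, h⟩).ne' hft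
  exact ⟨t, ⟨has, hsI.2⟩, hft, hpos⟩

theorem hasDerivWithinAt_of_inter_Iic_of_inter_Ici {f : ℝ → ℝ} {f' x z : ℝ} {s : Set ℝ}
    (hl : x ≤ z → HasDerivWithinAt f f' (s ∩ Iic z) x)
    (hr : z ≤ x → HasDerivWithinAt f f' (s ∩ Ici z) x) : HasDerivWithinAt f f' s x := by
  rcases lt_trichotomy x z with hxz | rfl | hzx
  · exact (hasDerivWithinAt_inter (Iic_mem_nhds hxz)).1 (hl hxz.le)
  · simpa [← inter_union_distrib_left] using (hl le_rfl).union (hr le_rfl)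
  · exact (hasDerivWithinAt_inter (Ici_mem_nhds hzx)).1 (hr hzx.le)

theorem exists_mem_Ioo_mul_add_mul_eq_zero {p q u v : ℝ → ℝ} {a b : ℝ} (hab : a ≤ b)
    (hp : ContinuousOn p (Icc a b)) (hq : ContinuousOn q (Icc a b))
    (hu : ContinuousOn u (Icc a b)) (hv : ContinuousOn v (Icc a b))
    (hpa : 0 < p a) (hqa : 0 < q a) (hua : 0 < u a) (hva : 0 < v a)
    (hpu : ∀ s ∈ Ioc a b, p s = 0 → (∀ t ∈ Ico a s, 0 < p t) → u s < 0)
    (hqv : ∀ s ∈ Ioc a b, q s = 0 → (∀ t ∈ Ico a s, 0 < q t) → v s < 0)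
    (hpb : p b = 0) : ∃ s ∈ Ioo a b, u s * q s + p s * v s = 0 := by
  suffices hneg : ∃ t ∈ Icc a b, u t * q t + p t * v t < 0 by
    obtain ⟨t, ht, hneg⟩ := hneg
    have hcont : ContinuousOn (fun s => u s * q s + p s * v s) (Icc a t) :=
      ((hu.mul hq).add (hp.mul hv)).mono (Icc_subset_Icc_right ht.2)
    obtain ⟨s, hs, hs0⟩ := intermediate_value_Ioo' ht.1 hcont
      ⟨hneg, add_pos (mul_pos hua hqa) (mul_pos hpa hva)⟩
    exact ⟨s, ⟨hs.1, hs.2.trans_le ht.2⟩, hs0⟩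
  obtain ⟨s, hs, hmin, hpos⟩ := exists_first_zero hab (hp.inf hq) (lt_min hpa hqa)
    (inf_le_left.trans hpb.le)
  have hppos : ∀ t ∈ Ico a s, 0 < p t := fun t ht => (hpos t ht).trans_le inf_le_left
  have hqpos : ∀ t ∈ Ico a s, 0 < q t := fun t ht => (hpos t ht).trans_le inf_le_right
  have hsI : s ∈ Icc a b := Ioc_subset_Icc_self hs
  have hps : 0 ≤ p s := hmin.ge.trans inf_le_left
  have hqs : 0 ≤ q s := hmin.ge.trans inf_le_right
  rcases hps.eq_or_lt' with hps | hps <;> rcases hqs.eq_or_lt' with hqs | hqs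
  · have hlt : ∀ᶠ t in 𝓝[Icc a b] s, u t < 0 ∧ v t < 0 :=
      ((hu s hsI).eventually (gt_mem_nhds (hpu s hs hps hppos))).and
        ((hv s hsI).eventually (gt_mem_nhds (hqv s hs hqs hqpos)))
    have hleft : 𝓝[Ioo a s] s ≤ 𝓝[Icc a b] s :=
      nhdsWithin_mono s fun t ht => ⟨ht.1.le, ht.2.le.trans hs.2⟩
    have : (𝓝[Ioo a s] s).NeBot := right_nhdsWithin_Ioo_neBot hs.1
    obtain ⟨t, ⟨hut, hvt⟩, ht⟩ := ((hlt.filter_mono hleft).and self_mem_nhdsWithin).exists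
    have htI : t ∈ Ico a s := Ioo_subset_Ico_self ht
    exact ⟨t, ⟨ht.1.le, ht.2.le.trans hs.2⟩, add_neg
      (mul_neg_of_neg_of_pos hut (hqpos t htI)) (mul_neg_of_pos_of_neg (hppos t htI) hvt)⟩
  · exact ⟨s, hsI, by simpa [hps] using mul_neg_of_neg_of_pos (hpu s hs hps hppos) hqs⟩
  · exact ⟨s, hsI, by simpa [hqs] using mul_neg_of_pos_of_neg hps (hqv s hs hqs hqpos)⟩
  · exact absurd hmin (lt_min hps hqs).ne'

/-! ### Weighted primitives -/

/-- A positive continuous weight on `(0, z]`, possibly degenerate or undefined at `0`, which is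
nondecreasing up to the factor `K`. -/
structure QuasiMonotoneWeight (w : ℝ → ℝ) (z K : ℝ) : Prop where
  pos_right : 0 < z
  continuousOn : ContinuousOn w (Ioc 0 z)
  pos : ∀ x ∈ Ioc 0 z, 0 < w x
  le_mul : ∀ s t, 0 < s → s ≤ t → t ≤ z → w s ≤ K * w t

/-- The normalized primitive `(∫₀ˣ w f) / w(x)`: it equals `-φ'(x) / μ` when `(w φ')' = -μ w f`
and `w φ'` vanishes at `0`. The division gives `flux w f 0 = 0` whatever `w 0` is. -/
def flux (w f : ℝ → ℝ) (x : ℝ) : ℝ := (∫ s in (0 : ℝ)..x, w s * f s) / w x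

theorem flux_zero_right (w f : ℝ → ℝ) : flux w f 0 = 0 := by simp [flux]

theorem flux_neg (w f : ℝ → ℝ) (x : ℝ) : flux w (fun s => -f s) x = -flux w f x := by
  simp [flux, neg_div]

theorem flux_const_mul (w f : ℝ → ℝ) (c x : ℝ) :
    flux w (fun s => c * f s) x = c * flux w f x := by
  simp only [flux, mul_left_comm, intervalIntegral.integral_const_mul, mul_div_assoc]

theorem flux_congr {w f g : ℝ → ℝ} {x : ℝ} (hx : 0 ≤ x) (hfg : EqOn f g (Icc 0 x)) :
    flux w f x = flux w g x := by
  unfold flux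
  congr 1
  refine intervalIntegral.integral_congr fun s hs => ?_
  rw [uIcc_of_le hx] at hs
  simp only [hfg hs]

namespace QuasiMonotoneWeight

variable {w f g : ℝ → ℝ} {x z K : ℝ}

theorem nonneg (h : QuasiMonotoneWeight w z K) : 0 ≤ K :=
  have hwz := h.pos z (right_mem_Ioc.2 h.pos_right)
  nonneg_of_mul_nonneg_left (hwz.le.trans (h.le_mul z z h.pos_right le_rfl le_rfl)) hwz

theorem const_one (hz : 0 < z) : QuasiMonotoneWeight (fun _ => 1) z 1 where
  pos_right := hz
  continuousOn := continuousOn_const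
  pos _ _ := one_pos
  le_mul _ _ _ _ _ := (one_mul (1 : ℝ)).ge

theorem restrict (h : QuasiMonotoneWeight w z K) (hx : x ∈ Ioc 0 z) :
    QuasiMonotoneWeight w x K where
  pos_right := hx.1
  continuousOn := h.continuousOn.mono (Ioc_subset_Ioc_right hx.2)
  pos t ht := h.pos t ⟨ht.1, ht.2.trans hx.2⟩
  le_mul s t hs hst ht := h.le_mul s t hs hst (ht.trans hx.2)

theorem intervalIntegrable_mul (h : QuasiMonotoneWeight w z K) (hf : ContinuousOn f (Icc 0 z)) :
    IntervalIntegrable (fun s => w s * f s) volume 0 z := by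
  have hw : IntervalIntegrable w volume 0 z := by
    rw [intervalIntegrable_iff_integrableOn_Ioc_of_le h.pos_right.le]
    refine Integrable.of_bound (h.continuousOn.aestronglyMeasurable measurableSet_Ioc) (K * w z) ?_
    filter_upwards [ae_restrict_mem measurableSet_Ioc] with s hs
    rw [Real.norm_of_nonneg (h.pos s hs).le]
    exact h.le_mul s z hs.1 hs.2 le_rfl
  exact hw.mul_continuousOn (by rwa [uIcc_of_le h.pos_right.le])

theorem mul_flux (h : QuasiMonotoneWeight w z K) (f : ℝ → ℝ) (hx : x ∈ Icc 0 z) :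
    w x * flux w f x = ∫ s in (0 : ℝ)..x, w s * f s := by
  rcases hx.1.eq_or_lt with rfl | hx0
  · simp [flux_zero_right]
  · exact mul_div_cancel₀ _ (h.pos x ⟨hx0, hx.2⟩).ne'

theorem intervalIntegrable_mul_of_mem (h : QuasiMonotoneWeight w z K)
    (hf : ContinuousOn f (Icc 0 z)) (hx : x ∈ Icc 0 z) :
    IntervalIntegrable (fun s => w s * f s) volume 0 x :=
  (h.intervalIntegrable_mul hf).mono_set (by
    rw [uIcc_of_le hx.1, uIcc_of_le h.pos_right.le]
    exact Icc_subset_Icc_right hx.2)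

theorem flux_add (h : QuasiMonotoneWeight w z K) (hf : ContinuousOn f (Icc 0 z))
    (hg : ContinuousOn g (Icc 0 z)) (hx : x ∈ Icc 0 z) :
    flux w (fun s => f s + g s) x = flux w f x + flux w g x := by
  simp only [flux, mul_add, add_div,
    intervalIntegral.integral_add (h.intervalIntegrable_mul_of_mem hf hx)
      (h.intervalIntegrable_mul_of_mem hg hx)]

theorem flux_le (h : QuasiMonotoneWeight w z K) (hf : ContinuousOn f (Icc 0 z)) {c : ℝ} {k : ℕ}
    (hc : 0 ≤ c) (hfc : ∀ s ∈ Icc 0 z, f s ≤ c * s ^ k) :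
    flux w f z ≤ K * c * (z ^ (k + 1) / (k + 1)) := by
  have hwz := h.pos z (right_mem_Ioc.2 h.pos_right)
  rw [flux, div_le_iff₀ hwz]
  calc ∫ s in (0 : ℝ)..z, w s * f s
      ≤ ∫ s in (0 : ℝ)..z, K * w z * (c * s ^ k) := by
        refine intervalIntegral.integral_mono_on_of_le_Ioo h.pos_right.le
          (h.intervalIntegrable_mul hf) (Continuous.intervalIntegrable (by fun_prop) _ _) ?_
        intro s hs
        calc w s * f s ≤ w s * (c * s ^ k) := mul_le_mul_of_nonneg_left
              (hfc s (Ioo_subset_Icc_self hs)) (h.pos s (Ioo_subset_Ioc_self hs)).le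
          _ ≤ K * w z * (c * s ^ k) := mul_le_mul_of_nonneg_right
              (h.le_mul s z hs.1 hs.2.le le_rfl) (mul_nonneg hc (pow_nonneg hs.1.le k))
    _ = K * c * (z ^ (k + 1) / (k + 1)) * w z := by
        rw [intervalIntegral.integral_const_mul, intervalIntegral.integral_const_mul, integral_pow]
        simp only [ne_eq, Nat.succ_ne_zero, not_false_eq_true, zero_pow, sub_zero]
        ring

theorem abs_flux_le (h : QuasiMonotoneWeight w z K) (hf : ContinuousOn f (Icc 0 z)) {c : ℝ} {k : ℕ}
    (hc : 0 ≤ c) (hfc : ∀ s ∈ Icc 0 z, |f s| ≤ c * s ^ k) (hx : x ∈ Icc 0 z) :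
    |flux w f x| ≤ K * c * (x ^ (k + 1) / (k + 1)) := by
  rcases hx.1.eq_or_lt with rfl | hx0
  · simp [flux_zero_right]
  have hxw := h.restrict ⟨hx0, hx.2⟩
  have hsub : Icc 0 x ⊆ Icc 0 z := Icc_subset_Icc_right hx.2
  refine abs_le'.2 ⟨hxw.flux_le (hf.mono hsub) hc fun s hs => ?_, ?_⟩
  · exact (le_abs_self _).trans (hfc s (hsub hs))
  · rw [← flux_neg]
    exact hxw.flux_le (hf.mono hsub).neg hc fun s hs => (neg_le_abs _).trans (hfc s (hsub hs))

theorem continuousOn_mul_flux (h : QuasiMonotoneWeight w z K) (hf : ContinuousOn f (Icc 0 z)) :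
    ContinuousOn (fun x => w x * flux w f x) (Icc 0 z) := by
  have hintegral := intervalIntegral.continuousOn_primitive_interval' (h.intervalIntegrable_mul hf)
    left_mem_uIcc
  rw [uIcc_of_le h.pos_right.le] at hintegral
  exact hintegral.congr fun x hx => h.mul_flux f hx

theorem continuousOn_flux (h : QuasiMonotoneWeight w z K) (hf : ContinuousOn f (Icc 0 z)) :
    ContinuousOn (flux w f) (Icc 0 z) := by
  intro x hx
  rcases hx.1.eq_or_lt with rfl | hx0
  · obtain ⟨M, hM⟩ := isCompact_Icc.exists_bound_of_continuousOn hf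
    have hM0 : 0 ≤ M := (norm_nonneg _).trans (hM 0 hx)
    have hlim : Tendsto (fun t => K * M * t) (𝓝[Icc 0 z] 0) (𝓝 0) :=
      (Continuous.tendsto' (by fun_prop) 0 0 (by simp)).mono_left nhdsWithin_le_nhds
    rw [ContinuousWithinAt, flux_zero_right]
    refine squeeze_zero_norm' ?_ hlim
    filter_upwards [self_mem_nhdsWithin] with t ht
    simpa using h.abs_flux_le hf (k := 0) hM0 (by simpa using hM) ht
  · have hdiv : ContinuousOn (flux w f) (Ioc 0 z) :=
      (((h.continuousOn_mul_flux hf).mono Ioc_subset_Icc_self).div h.continuousOn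
        fun t ht => (h.pos t ht).ne').congr
        fun t ht => (mul_div_cancel_left₀ _ (h.pos t ht).ne').symm
    refine (hdiv x ⟨hx0, hx.2⟩).mono_of_mem_nhdsWithin ?_
    filter_upwards [self_mem_nhdsWithin, mem_nhdsWithin_of_mem_nhds (Ioi_mem_nhds hx0)]
      with t ht ht0 using ⟨ht0, ht.2⟩

theorem hasDerivWithinAt_mul_flux (h : QuasiMonotoneWeight w z K) (hf : ContinuousOn f (Icc 0 z))
    (hx : x ∈ Ioc 0 z) :
    HasDerivWithinAt (fun t => w t * flux w f t) (w x * f x) (Ioc 0 z) x := by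
  have hhalf : 0 < x / 2 := half_pos hx.1
  have hsub : Icc (x / 2) z ⊆ Ioc 0 z := fun t ht => ⟨hhalf.trans_le ht.1, ht.2⟩
  have hmem : x ∈ Icc (x / 2) z := ⟨half_le_self hx.1.le, hx.2⟩
  have hcont : ContinuousOn (fun t => w t * f t) (Icc (x / 2) z) :=
    (h.continuousOn.mono hsub).mul (hf.mono (hsub.trans Ioc_subset_Icc_self))
  have : Fact (x ∈ Icc (x / 2) z) := ⟨hmem⟩
  have hintegral : HasDerivWithinAt (fun t => ∫ s in (0 : ℝ)..t, w s * f s) (w x * f x)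
      (Icc (x / 2) z) x := intervalIntegral.integral_hasDerivWithinAt_right
    (h.intervalIntegrable_mul_of_mem hf (Ioc_subset_Icc_self hx))
    (hcont.stronglyMeasurableAtFilter_nhdsWithin measurableSet_Icc x) (hcont x hmem)
  have hnhds : Icc (x / 2) z ∈ 𝓝[Ioc 0 z] x := by
    filter_upwards [self_mem_nhdsWithin, mem_nhdsWithin_of_mem_nhds
      (Ioi_mem_nhds (half_lt_self hx.1))] with t ht ht2 using ⟨le_of_lt ht2, ht.2⟩
  exact (hintegral.mono_of_mem_nhdsWithin hnhds).congr
    (fun t ht => h.mul_flux f (Ioc_subset_Icc_self ht)) (h.mul_flux f (Ioc_subset_Icc_self hx))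

theorem mul_flux_le_mul_flux (h : QuasiMonotoneWeight w z K) (hf : ContinuousOn f (Icc 0 z))
    (hf_nonneg : ∀ s ∈ Icc 0 z, 0 ≤ f s) (hx : x ∈ Icc 0 z) :
    w x * flux w f x ≤ w z * flux w f z := by
  rw [h.mul_flux f hx, h.mul_flux f (right_mem_Icc.2 h.pos_right.le)]
  refine intervalIntegral.integral_mono_interval le_rfl hx.1 hx.2 ?_ (h.intervalIntegrable_mul hf)
  filter_upwards [ae_restrict_mem measurableSet_Ioc] with s hs
  exact mul_nonneg (h.pos s hs).le (hf_nonneg s (Ioc_subset_Icc_self hs))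

theorem flux_pos (h : QuasiMonotoneWeight w z K) (hf : ContinuousOn f (Icc 0 z))
    (hf0 : 0 < f 0) (hf_nonneg : ∀ x ∈ Icc 0 z, 0 ≤ f x) : 0 < flux w f z := by
  refine div_pos ?_ (h.pos z (right_mem_Ioc.2 h.pos_right))
  obtain ⟨d, hd, hpos⟩ := exists_Icc_forall_pos h.pos_right hf hf0
  have hnonneg : 0 ≤ᵐ[volume.restrict (uIoc 0 z)] fun s => w s * f s := by
    filter_upwards [ae_restrict_mem measurableSet_uIoc] with s hs
    rw [uIoc_of_le h.pos_right.le] at hs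
    exact mul_nonneg (h.pos s hs).le (hf_nonneg s (Ioc_subset_Icc_self hs))
  have hsupp : Ioc 0 d ⊆ Function.support (fun s => w s * f s) ∩ Ioc 0 z := fun s hs =>
    have hsz : s ∈ Ioc 0 z := Ioc_subset_Ioc_right hd.2 hs
    ⟨(mul_pos (h.pos s hsz) (hpos s (Ioc_subset_Icc_self hs))).ne', hsz⟩
  rw [intervalIntegral.integral_pos_iff_support_of_nonneg_ae' hnonneg (h.intervalIntegrable_mul hf)]
  exact ⟨h.pos_right, lt_of_lt_of_le (by simpa using hd.1) (measure_mono hsupp)⟩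

end QuasiMonotoneWeight

/-! ### Shooting from the left endpoint -/

namespace QuasiMonotoneWeight

variable {w : ℝ → ℝ} {z K : ℝ}

/-- `flux w` as a bounded operator on `C([0, z])`. -/
def fluxCLM (h : QuasiMonotoneWeight w z K) : C(Icc 0 z, ℝ) →L[ℝ] C(Icc 0 z, ℝ) :=
  LinearMap.mkContinuous
    { toFun F := ⟨fun x => flux w (IccExtend h.pos_right.le F) x,
        continuousOn_iff_continuous_domRestrict.1
          (h.continuousOn_flux F.continuous.Icc_extend'.continuousOn)⟩
      map_add' F G := ContinuousMap.ext fun x => h.flux_add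
        F.continuous.Icc_extend'.continuousOn G.continuous.Icc_extend'.continuousOn x.2
      map_smul' c F := ContinuousMap.ext fun x => flux_const_mul w _ c x }
    (K * z) fun F => by
      have hK := h.nonneg
      have hz := h.pos_right
      refine (ContinuousMap.norm_le _ (by positivity)).2 fun x => ?_
      have hbound := h.abs_flux_le (f := IccExtend hz.le F) F.continuous.Icc_extend'.continuousOn
        (k := 0) (norm_nonneg F)
        (fun s _ => by simpa [IccExtend] using F.norm_coe_le_norm (projIcc 0 z hz.le s)) x.2
      calc |flux w (IccExtend hz.le F) x| ≤ K * ‖F‖ * x := by simpa using hbound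
        _ ≤ K * ‖F‖ * z := by gcongr; exact x.2.2
        _ = K * z * ‖F‖ := mul_right_comm ..

theorem fluxCLM_apply (h : QuasiMonotoneWeight w z K) (F : C(Icc 0 z, ℝ)) (x : Icc 0 z) :
    h.fluxCLM F x = flux w (IccExtend h.pos_right.le F) x := rfl

theorem abs_fluxCLM_apply_le (h : QuasiMonotoneWeight w z K) {F : C(Icc 0 z, ℝ)} {c : ℝ} {k : ℕ}
    (hc : 0 ≤ c) (hF : ∀ s : Icc 0 z, |F s| ≤ c * (s : ℝ) ^ k) (x : Icc 0 z) :
    |h.fluxCLM F x| ≤ K * c / (k + 1) * (x : ℝ) ^ (k + 1) := by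
  refine (h.abs_flux_le F.continuous.Icc_extend'.continuousOn hc (fun s hs => ?_) x.2).trans
    (by rw [mul_div_left_comm, mul_comm])
  rw [IccExtend_of_mem h.pos_right.le _ hs]
  exact hF ⟨s, hs⟩

/-- The operator `F ↦ ∫₀ˣ flux w F`: the problem `-(w f')' = l w f`, `w f' = 0` at `0`, is
`f + l • volterra f = f 0`. -/
def volterra (h : QuasiMonotoneWeight w z K) : C(Icc 0 z, ℝ) →L[ℝ] C(Icc 0 z, ℝ) :=
  (const_one h.pos_right).fluxCLM ∘L h.fluxCLM

theorem volterra_apply (h : QuasiMonotoneWeight w z K) (F : C(Icc 0 z, ℝ)) (x : Icc 0 z) :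
    h.volterra F x = ∫ t in (0 : ℝ)..x, flux w (IccExtend h.pos_right.le F) t := by
  simp only [volterra, ContinuousLinearMap.comp_apply, fluxCLM_apply, flux, one_mul, div_one]
  refine intervalIntegral.integral_congr fun t ht => ?_
  rw [uIcc_of_le x.2.1] at ht
  exact IccExtend_of_mem h.pos_right.le _ ⟨ht.1, ht.2.trans x.2.2⟩

theorem abs_volterra_pow_apply_le (h : QuasiMonotoneWeight w z K) (F : C(Icc 0 z, ℝ)) (k : ℕ)
    (x : Icc 0 z) :
    |(h.volterra ^ k) F x| ≤ ‖F‖ * K ^ k / (2 * k).factorial * (x : ℝ) ^ (2 * k) := by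
  have hK := h.nonneg
  induction k generalizing x with
  | zero => simpa using F.norm_coe_le_norm x
  | succ k ih =>
    rw [pow_succ', mul_apply_eq_comp]
    refine ((const_one h.pos_right).abs_fluxCLM_apply_le (by positivity)
      (h.abs_fluxCLM_apply_le (by positivity) ih) x).trans_eq ?_
    rw [show 2 * (k + 1) = 2 * k + 1 + 1 from rfl, Nat.factorial_succ, Nat.factorial_succ]
    push_cast
    field_simp
    ring

theorem norm_volterra_pow_le (h : QuasiMonotoneWeight w z K) (k : ℕ) :
    ‖h.volterra ^ k‖ ≤ (K * z ^ 2) ^ k / k.factorial := by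
  have hK := h.nonneg
  refine ContinuousLinearMap.opNorm_le_bound _ (by positivity) fun F =>
    (ContinuousMap.norm_le _ (by positivity)).2 fun x => ?_
  have hx := x.2.1
  calc |(h.volterra ^ k) F x| ≤ ‖F‖ * K ^ k / (2 * k).factorial * (x : ℝ) ^ (2 * k) :=
        h.abs_volterra_pow_apply_le F k x
    _ ≤ ‖F‖ * K ^ k / k.factorial * z ^ (2 * k) := by
        gcongr
        · omega
        · exact x.2.2
    _ = (K * z ^ 2) ^ k / k.factorial * ‖F‖ := by rw [mul_pow, pow_mul]; ring

theorem isUnit_one_add_smul_volterra (h : QuasiMonotoneWeight w z K) (l : ℝ) :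
    IsUnit (1 + l • h.volterra) :=
  isUnit_one_add_smul_of_norm_pow_le (R := C(Icc 0 z, ℝ) →L[ℝ] C(Icc 0 z, ℝ))
    h.norm_volterra_pow_le l

end QuasiMonotoneWeight

/-- `f` solves `-(w f')' = l w f` on `(0, z]` with `w f'` vanishing at `0`, in the once integrated
form `f' = -l * flux w f`. -/
def IsLeftNeumannSol (w : ℝ → ℝ) (z l : ℝ) (f : ℝ → ℝ) : Prop :=
  ∀ x ∈ Icc 0 z, HasDerivWithinAt f (-(l * flux w f x)) (Icc 0 z) x

namespace IsLeftNeumannSol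

variable {w f g : ℝ → ℝ} {z l : ℝ}

theorem continuousOn (hf : IsLeftNeumannSol w z l f) : ContinuousOn f (Icc 0 z) :=
  fun x hx => (hf x hx).continuousWithinAt

theorem const_mul (hf : IsLeftNeumannSol w z l f) (c : ℝ) :
    IsLeftNeumannSol w z l fun x => c * f x := fun x hx =>
  ((hf x hx).const_mul c).congr_deriv (by rw [flux_const_mul]; ring)

theorem congr (hf : IsLeftNeumannSol w z l f) (hgf : EqOn g f (Icc 0 z)) :
    IsLeftNeumannSol w z l g := fun x hx => by
  rw [flux_congr hx.1 (hgf.mono (Icc_subset_Icc_right hx.2))]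
  exact (hf x hx).congr hgf (hgf hx)

end IsLeftNeumannSol

namespace QuasiMonotoneWeight

variable {w f : ℝ → ℝ} {z K l : ℝ}

theorem one_add_smul_volterra_apply (h : QuasiMonotoneWeight w z K) (F : C(Icc 0 z, ℝ))
    (x : Icc 0 z) : (1 + l • h.volterra) F x =
      F x + l * ∫ t in (0 : ℝ)..x, flux w (IccExtend h.pos_right.le F) t :=
  congrArg (F x + l * ·) (h.volterra_apply F x)

theorem isLeftNeumannSol_IccExtend_iff (h : QuasiMonotoneWeight w z K) {F : C(Icc 0 z, ℝ)} :
    IsLeftNeumannSol w z l (IccExtend h.pos_right.le F) ↔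
      (1 + l • h.volterra) F = F ⟨0, left_mem_Icc.2 h.pos_right.le⟩ • 1 := by
  set f := IccExtend h.pos_right.le F with hf_def
  have hfF : ∀ x : Icc 0 z, F x = f x := fun x => (IccExtend_val h.pos_right.le F x).symm
  have hflux : ContinuousOn (flux w f) (Icc 0 z) :=
    h.continuousOn_flux F.continuous.Icc_extend'.continuousOn
  have hiff : (1 + l • h.volterra) F = F ⟨0, left_mem_Icc.2 h.pos_right.le⟩ • 1 ↔
      ∀ x ∈ Icc 0 z, f x = f 0 - l * ∫ t in (0 : ℝ)..x, flux w f t := by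
    simp only [ContinuousMap.ext_iff, one_add_smul_volterra_apply, hfF, Subtype.forall,
      eq_sub_iff_add_eq, ContinuousMap.smul_apply, ContinuousMap.one_apply, smul_eq_mul, mul_one,
      hf_def]
  rw [hiff]
  refine ⟨fun hf x hx => ?_, fun hf x hx => ?_⟩
  · have hintegral := intervalIntegral.integral_eq_sub_of_hasDeriv_right_of_le hx.1
      (hf.continuousOn.mono (Icc_subset_Icc_right hx.2))
      (fun t ht => (hf t ⟨ht.1.le, ht.2.le.trans hx.2⟩).hasDerivAt
        (Icc_mem_nhds ht.1 (ht.2.trans_le hx.2)) |>.hasDerivWithinAt)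
      (((hflux.mono (uIcc_subset_Icc (left_mem_Icc.2 h.pos_right.le) hx)).const_smul l).neg
        |>.intervalIntegrable)
    simp only [intervalIntegral.integral_neg, intervalIntegral.integral_const_mul] at hintegral
    linarith
  · have : Fact (x ∈ Icc 0 z) := ⟨hx⟩
    have hderiv : HasDerivWithinAt (fun t => ∫ s in (0 : ℝ)..t, flux w f s) (flux w f x)
        (Icc 0 z) x := intervalIntegral.integral_hasDerivWithinAt_right
      (hflux.mono (uIcc_subset_Icc (left_mem_Icc.2 h.pos_right.le) hx)).intervalIntegrable
      (hflux.stronglyMeasurableAtFilter_nhdsWithin measurableSet_Icc x) (hflux x hx)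
    exact ((hderiv.const_mul l).const_sub (f 0)).congr hf (hf x hx)

/-- The solution of the left Neumann problem with spectral parameter `l` and value `1` at `0`, as
an element of `C([0, z])`. -/
def shootingMap (h : QuasiMonotoneWeight w z K) (l : ℝ) : C(Icc 0 z, ℝ) :=
  Ring.inverse (1 + l • h.volterra) 1

/-- `shootingMap` extended to the line. -/
def shooting (h : QuasiMonotoneWeight w z K) (l : ℝ) : ℝ → ℝ :=
  IccExtend h.pos_right.le (h.shootingMap l)

theorem continuous_shootingMap (h : QuasiMonotoneWeight w z K) : Continuous h.shootingMap := by
  have hinv : Continuous fun l : ℝ => Ring.inverse (1 + l • h.volterra) :=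
    continuous_iff_continuousAt.2 fun l => ContinuousAt.comp (g := Ring.inverse)
      (NormedRing.inverse_continuousAt (R := C(Icc 0 z, ℝ) →L[ℝ] C(Icc 0 z, ℝ))
        (h.isUnit_one_add_smul_volterra l).unit)
      (Continuous.continuousAt (by fun_prop))
  exact hinv.clm_apply continuous_const

theorem one_add_smul_volterra_shootingMap (h : QuasiMonotoneWeight w z K) (l : ℝ) :
    (1 + l • h.volterra) (h.shootingMap l) = 1 :=
  congrArg (· 1) (Ring.mul_inverse_cancel _ (h.isUnit_one_add_smul_volterra l))

theorem shootingMap_zero_right (h : QuasiMonotoneWeight w z K) (l : ℝ) :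
    h.shootingMap l ⟨0, left_mem_Icc.2 h.pos_right.le⟩ = 1 := by
  have happly := h.one_add_smul_volterra_apply (l := l) (h.shootingMap l)
    ⟨0, left_mem_Icc.2 h.pos_right.le⟩
  rw [one_add_smul_volterra_shootingMap] at happly
  simpa using happly.symm

theorem shooting_zero_right (h : QuasiMonotoneWeight w z K) (l : ℝ) : h.shooting l 0 = 1 :=
  (IccExtend_left h.pos_right.le _).trans (h.shootingMap_zero_right l)

theorem shooting_zero_left (h : QuasiMonotoneWeight w z K) : h.shooting 0 = fun _ => 1 := by
  have hone : h.shootingMap 0 = 1 := by simpa using h.one_add_smul_volterra_shootingMap 0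
  rw [shooting, hone]
  rfl

theorem isLeftNeumannSol_shooting (h : QuasiMonotoneWeight w z K) (l : ℝ) :
    IsLeftNeumannSol w z l (h.shooting l) :=
  h.isLeftNeumannSol_IccExtend_iff.2 (by
    rw [h.shootingMap_zero_right, one_smul, h.one_add_smul_volterra_shootingMap])

theorem eqOn_mul_shooting (h : QuasiMonotoneWeight w z K) (hf : IsLeftNeumannSol w z l f) :
    EqOn f (fun x => f 0 * h.shooting l x) (Icc 0 z) := by
  let F : C(Icc 0 z, ℝ) :=
    ⟨(Icc 0 z).domRestrict f, continuousOn_iff_continuous_domRestrict.1 hf.continuousOn⟩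
  have hFf : EqOn (IccExtend h.pos_right.le F) f (Icc 0 z) := fun x hx =>
    IccExtend_of_mem h.pos_right.le F hx
  have hF : F = f 0 • h.shootingMap l := by
    calc F = Ring.inverse (1 + l • h.volterra) ((1 + l • h.volterra) F) :=
          (congrArg (· F) (Ring.inverse_mul_cancel _ (h.isUnit_one_add_smul_volterra l))).symm
      _ = f 0 • h.shootingMap l := by
          rw [h.isLeftNeumannSol_IccExtend_iff.1 (hf.congr hFf), map_smul]
          rfl
  intro x hx
  rw [← hFf hx, hF]
  rfl

end QuasiMonotoneWeight

/-! ### Gluing the solutions shot from both endpoints -/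

namespace QuasiMonotoneWeight

variable {w f g : ℝ → ℝ} {z K l l' : ℝ}

theorem green_identity (h : QuasiMonotoneWeight w z K) (hf : IsLeftNeumannSol w z l f)
    (hg : IsLeftNeumannSol w z l' g) :
    l * flux w f z * g z - l' * f z * flux w g z =
      (l - l') * flux w (fun x => f x * g x) z := by
  set wronskian : ℝ → ℝ := fun x => l * (w x * flux w f x) * g x - l' * f x * (w x * flux w g x)
    with hwronskian
  have hderiv : ∀ x ∈ Ioo 0 z,
      HasDerivAt wronskian ((l - l') * (w x * (f x * g x))) x := by
    intro x hx
    have hIcc : Icc 0 z ∈ 𝓝 x := Icc_mem_nhds hx.1 hx.2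
    have hIoc : Ioc 0 z ∈ 𝓝 x := Ioc_mem_nhds hx.1 hx.2
    have hx' := Ioo_subset_Icc_self hx
    have hwf := (h.hasDerivWithinAt_mul_flux hf.continuousOn ⟨hx.1, hx.2.le⟩).hasDerivAt hIoc
    have hwg := (h.hasDerivWithinAt_mul_flux hg.continuousOn ⟨hx.1, hx.2.le⟩).hasDerivAt hIoc
    exact (((hwf.const_mul l).mul ((hg x hx').hasDerivAt hIcc)).sub
      ((((hf x hx').hasDerivAt hIcc).const_mul l').mul hwg)).congr_deriv (by ring)
  have hcont : ContinuousOn wronskian (Icc 0 z) :=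
    (((h.continuousOn_mul_flux hf.continuousOn).const_mul l).mul hg.continuousOn).sub
      ((hf.continuousOn.const_mul l').mul (h.continuousOn_mul_flux hg.continuousOn))
  have hintegral := intervalIntegral.integral_eq_sub_of_hasDerivAt_of_le h.pos_right.le hcont hderiv
    ((h.intervalIntegrable_mul (hf.continuousOn.mul hg.continuousOn)).const_mul _)
  have hz : z ∈ Icc 0 z := right_mem_Icc.2 h.pos_right.le
  rw [intervalIntegral.integral_const_mul, ← h.mul_flux (fun x => f x * g x) hz] at hintegral
  simp only [hwronskian, flux_zero_right] at hintegral
  refine mul_left_cancel₀ (h.pos z (right_mem_Ioc.2 h.pos_right)).ne' ?_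
  linear_combination -hintegral

theorem continuous_flux_IccExtend (h : QuasiMonotoneWeight w z K) {F : ℝ → C(Icc 0 z, ℝ)}
    (hF : Continuous F) : Continuous fun t => flux w (IccExtend h.pos_right.le (F t)) z :=
  (continuous_eval_const (F := C(Icc 0 z, ℝ)) (⟨z, right_mem_Icc.2 h.pos_right.le⟩ : Icc 0 z)).comp
    (h.fluxCLM.continuous.comp hF)

theorem continuous_shooting_left (h : QuasiMonotoneWeight w z K) (x : ℝ) :
    Continuous fun t => h.shooting t x :=
  (continuous_eval_const _).comp h.continuous_shootingMap

theorem continuous_flux_shooting (h : QuasiMonotoneWeight w z K) :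
    Continuous fun t => flux w (h.shooting t) z :=
  h.continuous_flux_IccExtend h.continuous_shootingMap

theorem flux_shooting_zero_pos (h : QuasiMonotoneWeight w z K) :
    0 < flux w (h.shooting 0) z := by
  rw [shooting_zero_left]
  exact h.flux_pos continuousOn_const one_pos fun _ _ => zero_le_one

theorem shooting_neg_of_first_zero (h : QuasiMonotoneWeight w z K) (hl : 0 < l)
    (hflux : flux w (h.shooting l) z = 0)
    (hpos : ∀ t ∈ Ico 0 l, 0 < flux w (h.shooting t) z) : h.shooting l z < 0 := by
  have hsol := h.isLeftNeumannSol_shooting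
  have hlim : Continuous fun t => flux w (fun x => h.shooting t x * h.shooting l x) z :=
    h.continuous_flux_IccExtend (h.continuous_shootingMap.mul_const (h.shootingMap l))
  have hsq : 0 < flux w (fun x => h.shooting l x * h.shooting l x) z :=
    h.flux_pos ((hsol l).continuousOn.mul (hsol l).continuousOn)
      (by simp [shooting_zero_right]) fun x _ => mul_self_nonneg _
  obtain ⟨t, htpos, ht⟩ := (((hlim.tendsto l).mono_left nhdsWithin_le_nhds).eventually
    (lt_mem_nhds hsq) |>.and (Ioo_mem_nhdsLT hl)).exists
  have hgreen := h.green_identity (hsol t) (hsol l)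
  rw [hflux, mul_zero, sub_zero] at hgreen
  have hneg : t * flux w (h.shooting t) z * h.shooting l z < 0 :=
    hgreen ▸ mul_neg_of_neg_of_pos (sub_neg.2 ht.2) htpos
  exact (pos_iff_neg_of_mul_neg hneg).1 (mul_pos ht.1 (hpos t ⟨ht.1.le, ht.2⟩))

end QuasiMonotoneWeight

/-- Precomposition with the reflection `x ↦ 1 - x` of `[0, 1]`, used to shoot from the right. -/
def reflect (f : ℝ → ℝ) : ℝ → ℝ := fun x => f (1 - x)

theorem reflect_one_sub (f : ℝ → ℝ) (x : ℝ) : reflect f (1 - x) = f x :=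
  congrArg f (sub_sub_cancel 1 x)

theorem reflect_reflect (f : ℝ → ℝ) : reflect (reflect f) = f := funext (reflect_one_sub f)

theorem hasDerivWithinAt_reflect {f : ℝ → ℝ} {f' x : ℝ} {s t : Set ℝ}
    (hf : HasDerivWithinAt f f' t (1 - x)) (hst : MapsTo (fun y => 1 - y) s t) :
    HasDerivWithinAt (reflect f) (-f') s x :=
  (hf.comp x ((hasDerivAt_id x).const_sub 1).hasDerivWithinAt hst).congr_deriv (by ring)

theorem antitoneOn_neg_reflect {f : ℝ → ℝ} (hf : AntitoneOn f (Icc 0 1)) :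
    AntitoneOn (fun t => -reflect f t) (Icc 0 1) := fun _ hs _ ht hst =>
  neg_le_neg (hf ⟨sub_nonneg.2 ht.2, sub_le_self 1 ht.1⟩ ⟨sub_nonneg.2 hs.2, sub_le_self 1 hs.1⟩
    (sub_le_sub_left hst 1))

theorem neumannSol_of_left_of_right {w φ φd : ℝ → ℝ} {z l K K' : ℝ}
    (hw : QuasiMonotoneWeight w z K) (hw' : QuasiMonotoneWeight (reflect w) (1 - z) K')
    (hl : IsLeftNeumannSol w z l φ) (hr : IsLeftNeumannSol (reflect w) (1 - z) l (reflect φ))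
    (hφl : EqOn φd (fun x => -(l * flux w φ x)) (Icc 0 z))
    (hφr : EqOn φd (reflect fun x => l * flux (reflect w) (reflect φ) x) (Icc z 1))
    (hne : ∃ x ∈ Icc (0 : ℝ) 1, φ x ≠ 0) : NeumannSol w l φ φd := by
  have hz0 : 0 < z := hw.pos_right
  have hz1 : z < 1 := sub_pos.1 hw'.pos_right
  have hmaps : MapsTo (fun x => 1 - x) (Icc z 1) (Icc 0 (1 - z)) := fun x hx =>
    ⟨sub_nonneg.2 hx.2, sub_le_sub_left hx.1 1⟩
  have hmaps' : MapsTo (fun x => 1 - x) (Ico z 1) (Ioc 0 (1 - z)) := fun x hx =>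
    ⟨sub_pos.2 hx.2, sub_le_sub_left hx.1 1⟩
  refine ⟨fun x hx => ?_, ?_, ?_, ?_, hne, fun x hx => ?_⟩
  · refine hasDerivWithinAt_of_inter_Iic_of_inter_Ici (z := z) (fun hxz => ?_) fun hzx => ?_
    · rw [show Icc 0 1 ∩ Iic z = Icc 0 z by grind, hφl ⟨hx.1, hxz⟩]
      exact hl x ⟨hx.1, hxz⟩
    · rw [show Icc 0 1 ∩ Ici z = Icc z 1 by grind, hφr ⟨hzx, hx.2⟩]
      simpa [reflect_reflect, reflect] using
        hasDerivWithinAt_reflect (hr (1 - x) (hmaps ⟨hzx, hx.2⟩)) hmaps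
  · rw [← Icc_union_Icc_eq_Icc hz0.le hz1.le]
    exact (((hw.continuousOn_flux hl.continuousOn).const_mul l).neg.congr hφl).union_of_isClosed
      ((((hw'.continuousOn_flux hr.continuousOn).const_mul l).comp (by fun_prop) hmaps).congr hφr)
      isClosed_Icc isClosed_Icc
  · simp [hφl ⟨le_rfl, hz0.le⟩, flux_zero_right]
  · simp [hφr ⟨hz1.le, le_rfl⟩, reflect, flux_zero_right]
  · refine (hasDerivWithinAt_of_inter_Iic_of_inter_Ici (z := z) (fun hxz => ?_)
      fun hzx => ?_).hasDerivAt (Ioo_mem_nhds hx.1 hx.2)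
    · rw [show Ioo 0 1 ∩ Iic z = Ioc 0 z by grind]
      have heq : EqOn (fun t => w t * φd t) (fun t => -l * (w t * flux w φ t)) (Ioc 0 z) :=
        fun t ht => by simp only [hφl (Ioc_subset_Icc_self ht)]; ring
      exact (((hw.hasDerivWithinAt_mul_flux hl.continuousOn ⟨hx.1, hxz⟩).const_mul (-l)).congr heq
        (heq ⟨hx.1, hxz⟩)).congr_deriv (by ring)
    · rw [show Ioo 0 1 ∩ Ici z = Ico z 1 by grind]
      have heq : EqOn (fun t => w t * φd t)
          (reflect fun t => l * (reflect w t * flux (reflect w) (reflect φ) t)) (Ico z 1) :=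
        fun t ht => by simp only [hφr (Ico_subset_Icc_self ht), reflect, sub_sub_cancel]; ring
      exact ((hasDerivWithinAt_reflect ((hw'.hasDerivWithinAt_mul_flux hr.continuousOn
        (hmaps' ⟨hzx, hx.2⟩)).const_mul l) hmaps').congr heq (heq ⟨hzx, hx.2⟩)).congr_deriv
        (by simp only [reflect, sub_sub_cancel]; ring)

theorem isNeumannEigenvalue_of_glue {w f g : ℝ → ℝ} {z l K K' : ℝ}
    (hw : QuasiMonotoneWeight w z K) (hw' : QuasiMonotoneWeight (reflect w) (1 - z) K')
    (hf : IsLeftNeumannSol w z l f) (hg : IsLeftNeumannSol (reflect w) (1 - z) l g)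
    (hfg : f z = g (1 - z)) (hflux : flux w f z = -flux (reflect w) g (1 - z))
    (hne : f 0 ≠ 0 ∨ g 0 ≠ 0) : IsNeumannEigenvalue w l := by
  have hz0 : 0 < z := hw.pos_right
  set φ : ℝ → ℝ := fun x => if x ≤ z then f x else g (1 - x) with hφ
  set φd : ℝ → ℝ := fun x =>
    if x ≤ z then -(l * flux w f x) else l * flux (reflect w) g (1 - x) with hφd
  have hφf : EqOn φ f (Icc 0 z) := fun x hx => if_pos hx.2
  have hφg : EqOn (reflect φ) g (Icc 0 (1 - z)) := fun x hx => by
    rcases hx.2.eq_or_lt with rfl | hxz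
    · simp [hφ, reflect, hfg]
    · simp [hφ, reflect, not_le.2 (lt_sub_comm.1 hxz)]
  refine ⟨φ, φd, neumannSol_of_left_of_right hw hw' (hf.congr hφf) (hg.congr hφg)
    (fun x hx => ?_) (fun x hx => ?_) ?_⟩
  · simp only [hφd, if_pos hx.2, flux_congr hx.1 (hφf.mono (Icc_subset_Icc_right hx.2))]
  · rw [reflect, flux_congr (sub_nonneg.2 hx.2)
      (hφg.mono (Icc_subset_Icc_right (sub_le_sub_left hx.1 1)))]
    rcases hx.1.eq_or_lt with rfl | hzx
    · simp [hφd, hflux]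
    · simp [hφd, not_le.2 hzx]
  · rcases hne with hf0 | hg0
    · exact ⟨0, by simp, by rwa [hφf ⟨le_rfl, hz0.le⟩]⟩
    · have hφ1 : φ 1 = g 0 := by simpa [reflect] using hφg ⟨le_rfl, hw'.pos_right.le⟩
      exact ⟨1, by simp, hφ1 ▸ hg0⟩

theorem exists_mul_eq_mul_and_mul_eq_neg_mul {R : Type*} [CommRing R] [Nontrivial R]
    {u v p q : R} (h : u * q + p * v = 0) :
    ∃ a b : R, (a ≠ 0 ∨ b ≠ 0) ∧ a * u = b * v ∧ a * p = -(b * q) := by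
  by_cases huv : v ≠ 0 ∨ u ≠ 0
  · exact ⟨v, u, huv, mul_comm v u, by linear_combination h⟩
  by_cases hpq : q ≠ 0 ∨ -p ≠ 0
  · exact ⟨q, -p, hpq, by linear_combination h, by ring⟩
  · refine ⟨1, 1, Or.inl one_ne_zero, ?_, ?_⟩ <;> grind

theorem IsLeftNeumannSol.exists_isNeumannEigenvalue_lt {w f : ℝ → ℝ} {z l K K' : ℝ}
    (hf : IsLeftNeumannSol w z l f) (hw : QuasiMonotoneWeight w z K)
    (hw' : QuasiMonotoneWeight (reflect w) (1 - z) K') (hl : 0 < l) (hf0 : f 0 ≠ 0)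
    (hflux : flux w f z = 0) : ∃ l' ∈ Ioo 0 l, IsNeumannEigenvalue w l' := by
  have hflux_shooting : flux w (hw.shooting l) z = 0 := by
    rw [flux_congr hw.pos_right.le (hw.eqOn_mul_shooting hf), flux_const_mul] at hflux
    exact (mul_eq_zero.1 hflux).resolve_left hf0
  obtain ⟨l', hl', hdet⟩ := exists_mem_Ioo_mul_add_mul_eq_zero hl.le
    hw.continuous_flux_shooting.continuousOn hw'.continuous_flux_shooting.continuousOn
    (hw.continuous_shooting_left z).continuousOn
    (hw'.continuous_shooting_left (1 - z)).continuousOn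
    hw.flux_shooting_zero_pos hw'.flux_shooting_zero_pos
    (by simp [QuasiMonotoneWeight.shooting_zero_left])
    (by simp [QuasiMonotoneWeight.shooting_zero_left])
    (fun s hs => hw.shooting_neg_of_first_zero hs.1)
    (fun s hs => hw'.shooting_neg_of_first_zero hs.1) hflux_shooting
  obtain ⟨a, b, hab, hval, hfluxes⟩ := exists_mul_eq_mul_and_mul_eq_neg_mul hdet
  refine ⟨l', hl', isNeumannEigenvalue_of_glue hw hw'
    ((hw.isLeftNeumannSol_shooting l').const_mul a)
    ((hw'.isLeftNeumannSol_shooting l').const_mul b) hval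
    (by simpa only [flux_const_mul] using hfluxes) ?_⟩
  simpa only [QuasiMonotoneWeight.shooting_zero_right, mul_one] using hab

namespace NeumannSol

variable {w φ φd : ℝ → ℝ} {z μ K K' : ℝ}

theorem tendsto_mul_deriv_zero (hs : NeumannSol w μ φ φd) (hw : QuasiMonotoneWeight w z K) :
    Tendsto (fun t => w t * φd t) (𝓝[>] 0) (𝓝 0) := by
  have hlim : Tendsto (fun t => K * w z * ‖φd t‖) (𝓝[>] 0) (𝓝 0) := by
    have hcont : ContinuousWithinAt φd (Ioi 0) 0 := (hs.2.1 0 ⟨le_rfl, zero_le_one⟩)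
      |>.mono_of_mem_nhdsWithin (Icc_mem_nhdsGT zero_lt_one)
    simpa [hs.2.2.1] using (hcont.norm.const_mul (K * w z)).tendsto
  refine squeeze_zero_norm' ?_ hlim
  filter_upwards [Ioc_mem_nhdsGT hw.pos_right] with t ht
  rw [norm_mul, Real.norm_of_nonneg (hw.pos t ht).le]
  exact mul_le_mul_of_nonneg_right (hw.le_mul t z ht.1 ht.2 le_rfl) (norm_nonneg _)

theorem continuousOn (hs : NeumannSol w μ φ φd) : ContinuousOn φ (Icc 0 1) :=
  fun x hx => (hs.1 x hx).continuousWithinAt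

theorem deriv_eq_neg_mul_flux (hs : NeumannSol w μ φ φd) (hw : QuasiMonotoneWeight w z K)
    (hz : z < 1) : φd z = -(μ * flux w φ z) := by
  have hz01 : z ∈ Ioo 0 1 := ⟨hw.pos_right, hz⟩
  have hintegral := intervalIntegral.integral_eq_sub_of_hasDerivAt_of_tendsto (a := 0) (b := z)
    hw.pos_right (fun t ht => hs.2.2.2.2.2 t ⟨ht.1, ht.2.trans hz⟩)
    (by
      simp only [mul_assoc]
      exact ((hw.intervalIntegrable_mul
        (hs.continuousOn.mono (Icc_subset_Icc_right hz.le))).const_mul μ).neg)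
    (hs.tendsto_mul_deriv_zero hw)
    ((hs.2.2.2.2.2 z hz01).continuousAt.continuousWithinAt)
  simp only [mul_assoc, intervalIntegral.integral_neg, intervalIntegral.integral_const_mul,
    ← hw.mul_flux φ (right_mem_Icc.2 hw.pos_right.le)] at hintegral
  refine mul_left_cancel₀ (hw.pos z (right_mem_Ioc.2 hw.pos_right)).ne' ?_
  linear_combination -hintegral

theorem isLeftNeumannSol (hs : NeumannSol w μ φ φd) (hw : QuasiMonotoneWeight w z K)
    (hz : z < 1) : IsLeftNeumannSol w z μ φ := by
  intro x hx
  have hderiv : φd x = -(μ * flux w φ x) := by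
    rcases hx.1.eq_or_lt with rfl | hx0
    · simp [hs.2.2.1, flux_zero_right]
    · exact hs.deriv_eq_neg_mul_flux (hw.restrict ⟨hx0, hx.2⟩) (hx.2.trans_lt hz)
  rw [← hderiv]
  exact (hs.1 x ⟨hx.1, hx.2.trans hz.le⟩).mono (Icc_subset_Icc_right hz.le)

theorem neg_reflect (hs : NeumannSol w μ φ φd) :
    NeumannSol (reflect w) μ (fun x => -reflect φ x) (reflect φd) := by
  obtain ⟨hderiv, hcont, hzero, hone, ⟨y, hy, hφy⟩, hode⟩ := hs
  have hmaps : MapsTo (fun x : ℝ => 1 - x) (Icc 0 1) (Icc 0 1) := fun x hx =>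
    ⟨sub_nonneg.2 hx.2, sub_le_self 1 hx.1⟩
  refine ⟨fun x hx => ?_, hcont.comp (by fun_prop) hmaps, by simpa [reflect], by simpa [reflect],
    ⟨1 - y, hmaps hy, by simpa [reflect_one_sub]⟩, fun x hx => ?_⟩
  · exact (hasDerivWithinAt_reflect (hderiv (1 - x) (hmaps hx)) hmaps).neg.congr_deriv
      (neg_neg _)
  · exact ((hode (1 - x) ⟨sub_pos.2 hx.2, sub_lt_self 1 hx.1⟩).comp x
      ((hasDerivAt_id x).const_sub 1)).congr_deriv (by simp only [reflect]; ring)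

theorem deriv_ne_zero (hs : NeumannSol w μ φ φd) (hw : QuasiMonotoneWeight w z K)
    (hw' : QuasiMonotoneWeight (reflect w) (1 - z) K') (hμ : 0 < μ)
    (hmin : ∀ μ', 0 < μ' → IsNeumannEigenvalue w μ' → μ ≤ μ') (h0 : φ 0 ≠ 0) : φd z ≠ 0 := by
  have hz : z < 1 := sub_pos.1 hw'.pos_right
  intro hφd
  have hflux : flux w φ z = 0 := by
    simpa [hs.deriv_eq_neg_mul_flux hw hz, hμ.ne'] using hφd
  obtain ⟨μ', hμ', heig⟩ :=
    (hs.isLeftNeumannSol hw hz).exists_isNeumannEigenvalue_lt hw hw' hμ h0 hflux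
  exact (hmin μ' hμ'.1 heig).not_gt hμ'.2

end NeumannSol

/-- A positive weight on `(0, 1)` which dominates the cross-sectional volume `a ^ m * w s` of each
cone with base at `s` and apex over `r`. This is what remains of the Brunn–Minkowski concavity of
`w ^ (1 / m)` after dropping the contribution of the second endpoint. -/
structure ConeWeight (m : ℕ) (w : ℝ → ℝ) : Prop where
  pos : ∀ x ∈ Ioo (0 : ℝ) 1, 0 < w x
  pow_mul_le : ∀ s ∈ Ioo (0 : ℝ) 1, ∀ r ∈ Ioo (0 : ℝ) 1, ∀ a b : ℝ, 0 ≤ a → 0 ≤ b → a + b = 1 →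
    a ^ m * w s ≤ w (a * s + b * r)

namespace ConeWeight

variable {m : ℕ} {w f : ℝ → ℝ} {s t x z : ℝ}

theorem reflect (h : ConeWeight m w) : ConeWeight m (reflect w) where
  pos x hx := h.pos (1 - x) ⟨sub_pos.2 hx.2, sub_lt_self 1 hx.1⟩
  pow_mul_le s hs r hr a b ha hb hab := by
    have hcone := h.pow_mul_le (1 - s) ⟨sub_pos.2 hs.2, sub_lt_self 1 hs.1⟩ (1 - r)
      ⟨sub_pos.2 hr.2, sub_lt_self 1 hr.1⟩ a b ha hb hab
    rwa [show a * (1 - s) + b * (1 - r) = 1 - (a * s + b * r) by linear_combination hab] at hcone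

theorem mul_one_sub_pow_le (h : ConeWeight m w) (hs : 0 < s) (hst : s ≤ t) (ht : t < 1) :
    w s * (1 - t) ^ m ≤ w t * (1 - s) ^ m := by
  have hcone : ∀ r ∈ Ioo t 1, w s * (r - t) ^ m ≤ w t * (r - s) ^ m := by
    intro r hr
    have hrs : 0 < r - s := sub_pos.2 (hst.trans_lt hr.1)
    have hle := h.pow_mul_le s ⟨hs, hst.trans_lt ht⟩ r ⟨hs.trans (hst.trans_lt hr.1), hr.2⟩
      ((r - t) / (r - s)) ((t - s) / (r - s)) (div_nonneg (sub_nonneg.2 hr.1.le) hrs.le)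
      (div_nonneg (sub_nonneg.2 hst) hrs.le) (by field_simp; ring)
    rw [show (r - t) / (r - s) * s + (t - s) / (r - s) * r = t by field_simp; ring, div_pow,
      div_mul_eq_mul_div, div_le_iff₀ (pow_pos hrs m)] at hle
    rwa [mul_comm (w s)]
  refine le_of_tendsto_of_tendsto (b := 𝓝[<] (1 : ℝ)) (f := fun r => w s * (r - t) ^ m)
    (g := fun r => w t * (r - s) ^ m) ?_ ?_ ?_
  · exact Continuous.continuousWithinAt (by fun_prop)
  · exact Continuous.continuousWithinAt (by fun_prop)
  · filter_upwards [Ioo_mem_nhdsLT ht] with r hr using hcone r hr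

theorem mul_pow_le (h : ConeWeight m w) (hs : 0 < s) (hst : s ≤ t) (ht : t < 1) :
    w t * s ^ m ≤ w s * t ^ m := by
  simpa [_root_.reflect] using h.reflect.mul_one_sub_pow_le (sub_pos.2 ht)
    (sub_le_sub_left hst 1) (sub_lt_self 1 hs)

theorem min_pow_mul_le (h : ConeWeight m w) (hs : s ∈ Ioo 0 1) (ht : t ∈ Ioo 0 1) :
    min (t / s) ((1 - t) / (1 - s)) ^ m * w s ≤ w t := by
  have hs1 : 0 < 1 - s := sub_pos.2 hs.2
  have ht1 : 0 < 1 - t := sub_pos.2 ht.2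
  have hmin : 0 ≤ min (t / s) ((1 - t) / (1 - s)) :=
    le_min (div_nonneg ht.1.le hs.1.le) (div_nonneg ht1.le hs1.le)
  rcases le_total s t with hst | hts
  · refine (mul_le_mul_of_nonneg_right (pow_le_pow_left₀ hmin (min_le_right _ _) m)
      (h.pos s hs).le).trans ?_
    rw [div_pow, div_mul_eq_mul_div, div_le_iff₀ (pow_pos hs1 m), mul_comm]
    exact h.mul_one_sub_pow_le hs.1 hst ht.2
  · refine (mul_le_mul_of_nonneg_right (pow_le_pow_left₀ hmin (min_le_left _ _) m)
      (h.pos s hs).le).trans ?_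
    rw [div_pow, div_mul_eq_mul_div, div_le_iff₀ (pow_pos hs.1 m), mul_comm]
    exact h.mul_pow_le ht.1 hts hs.2

theorem continuousOn (h : ConeWeight m w) : ContinuousOn w (Ioo 0 1) := by
  intro x hx
  have hx0 : x ≠ 0 := hx.1.ne'
  have hx1 : 1 - x ≠ 0 := (sub_pos.2 hx.2).ne'
  have hlower : ContinuousAt (fun t => min (t / x) ((1 - t) / (1 - x)) ^ m * w x) x := by
    fun_prop
  have hupper : ContinuousAt (fun t => w x / min (x / t) ((1 - x) / (1 - t)) ^ m) x := by
    fun_prop (disch := simp [hx0, hx1])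
  refine (tendsto_of_tendsto_of_tendsto_of_le_of_le' (f := w)
    (by simpa [hx0, hx1] using hlower.tendsto) (by simpa [hx0, hx1] using hupper.tendsto)
    ?_ ?_).mono_left nhdsWithin_le_nhds
  · filter_upwards [Ioo_mem_nhds hx.1 hx.2] with t ht using h.min_pow_mul_le hx ht
  · filter_upwards [Ioo_mem_nhds hx.1 hx.2] with t ht
    have hmin : 0 < min (x / t) ((1 - x) / (1 - t)) :=
      lt_min (div_pos hx.1 ht.1) (div_pos (sub_pos.2 hx.2) (sub_pos.2 ht.2))
    rw [le_div_iff₀ (pow_pos hmin m), mul_comm]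
    exact h.min_pow_mul_le ht hx

theorem quasiMonotoneWeight (h : ConeWeight m w) (hz : z ∈ Ioo 0 1) :
    QuasiMonotoneWeight w z ((1 - z) ^ m)⁻¹ where
  pos_right := hz.1
  continuousOn := h.continuousOn.mono (Ioc_subset_Ioo_right hz.2)
  pos x hx := h.pos x ⟨hx.1, hx.2.trans_lt hz.2⟩
  le_mul s t hs hst htz := by
    have ht : t < 1 := htz.trans_lt hz.2
    have hwt := h.pos t ⟨hs.trans_le hst, ht⟩
    have hws := h.pos s ⟨hs, hst.trans_lt ht⟩
    rw [inv_mul_eq_div, le_div_iff₀ (pow_pos (sub_pos.2 hz.2) m)]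
    calc w s * (1 - z) ^ m ≤ w s * (1 - t) ^ m := by gcongr; linarith [hz.2]
      _ ≤ w t * (1 - s) ^ m := h.mul_one_sub_pow_le hs hst ht
      _ ≤ w t := mul_le_of_le_one_right hwt.le
        (pow_le_one₀ (by linarith) (by linarith))

theorem mul_div_le_flux (h : ConeWeight m w) (hx : x ∈ Ioo 0 1) (hf : ContinuousOn f (Icc 0 x))
    {c : ℝ} (hc : 0 ≤ c) (hcf : ∀ s ∈ Icc 0 x, c ≤ f s) : c * x / (m + 1) ≤ flux w f x := by
  have hwx := h.pos x hx
  rw [flux, le_div_iff₀ hwx]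
  calc c * x / (m + 1) * w x = ∫ s in (0 : ℝ)..x, c * w x / x ^ m * s ^ m := by
        have := hx.1.ne'
        rw [intervalIntegral.integral_const_mul, integral_pow, zero_pow m.succ_ne_zero]
        field_simp
        ring
    _ ≤ ∫ s in (0 : ℝ)..x, w s * f s := by
        refine intervalIntegral.integral_mono_on_of_le_Ioo hx.1.le
          (Continuous.intervalIntegrable (by fun_prop) _ _)
          ((h.quasiMonotoneWeight hx).intervalIntegrable_mul hf) fun s hs => ?_
        have hws := h.pos s ⟨hs.1, hs.2.trans hx.2⟩
        calc c * w x / x ^ m * s ^ m = c * (w x * s ^ m / x ^ m) := by ring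
          _ ≤ c * w s := by
            gcongr
            exact (div_le_iff₀ (pow_pos hx.1 m)).2 (h.mul_pow_le hs.1 hs.2.le hx.2)
          _ ≤ w s * f s := by
            rw [mul_comm]
            exact mul_le_mul_of_nonneg_left (hcf s (Ioo_subset_Icc_self hs)) hws.le

end ConeWeight

/-! ### Cross-sections of convex sets -/

theorem smul_mkPt_add_smul_mkPt (m : ℕ) (a b x x' : ℝ) (y y' : EuclideanSpace ℝ (Fin m)) :
    a • mkPt m x y + b • mkPt m x' y' = mkPt m (a * x + b * x') (a • y + b • y') := by
  ext i
  refine Fin.cases ?_ (fun j => ?_) i <;> simp [mkPt]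

theorem continuous_mkPt (m : ℕ) (s : ℝ) : Continuous (mkPt m s) :=
  (EuclideanSpace.equiv (Fin (m + 1)) ℝ).symm.continuous.comp
    (continuous_const.finCons (EuclideanSpace.equiv (Fin m) ℝ).continuous)

theorem norm_le_norm_mkPt {m : ℕ} (s : ℝ) (y : EuclideanSpace ℝ (Fin m)) :
    ‖y‖ ≤ ‖mkPt m s y‖ := by
  simp only [EuclideanSpace.norm_eq, Fin.sum_univ_succ]
  exact Real.sqrt_le_sqrt (le_add_of_nonneg_left (sq_nonneg _))

section CrossSection

variable {m : ℕ} {Ω : Set (EuclideanSpace ℝ (Fin (m + 1)))}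

theorem isBounded_cross (hΩ : Bornology.IsBounded Ω) (s : ℝ) :
    Bornology.IsBounded (cross Ω s) := by
  obtain ⟨R, hR⟩ := hΩ.exists_norm_le
  exact isBounded_iff_forall_norm_le.2 ⟨R, fun y hy => (norm_le_norm_mkPt s y).trans (hR _ hy)⟩

theorem pow_mul_ωvol_le (hconv : Convex ℝ Ω) (hbdd : Bornology.IsBounded Ω) {s r a b : ℝ}
    (hr : (cross Ω r).Nonempty) (ha : 0 ≤ a) (hb : 0 ≤ b) (hab : a + b = 1) :
    a ^ m * ωvol Ω s ≤ ωvol Ω (a * s + b * r) := by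
  obtain ⟨apex, hapex⟩ := hr
  have hcone : AffineMap.homothety apex a '' cross Ω s ⊆ cross Ω (a * s + b * r) := by
    rintro _ ⟨y, hy, rfl⟩
    have hmem := hconv hy hapex ha hb hab
    rw [smul_mkPt_add_smul_mkPt] at hmem
    rwa [AffineMap.homothety_eq_lineMap, AffineMap.lineMap_apply_module,
      ← eq_sub_of_add_eq' hab, add_comm (b • apex)]
  have hvol := measureReal_mono (μ := volume) hcone (isBounded_cross hbdd _).measure_lt_top.ne
  rwa [Measure.real, Measure.addHaar_image_homothety, ENNReal.toReal_mul,
    ENNReal.toReal_ofReal (abs_nonneg _), abs_of_nonneg (by positivity),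
    finrank_euclideanSpace_fin] at hvol

theorem coneWeight_ωvol (hopen : IsOpen Ω) (hconv : Convex ℝ Ω) (hbdd : Bornology.IsBounded Ω)
    (hne : ∀ s ∈ Ioo (0 : ℝ) 1, (cross Ω s).Nonempty) : ConeWeight m (ωvol Ω) where
  pos x hx := ENNReal.toReal_pos
    ((hopen.preimage (continuous_mkPt m x)).measure_pos volume (hne x hx)).ne'
    (isBounded_cross hbdd x).measure_lt_top.ne
  pow_mul_le _ _ r hr _ _ := pow_mul_ωvol_le hconv hbdd (hne r hr)

end CrossSection

/-! ### Quantitative estimates -/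

/-- A scale, depending only on the dimension and the upper bound `C` for the eigenvalue, on which
a decreasing solution retains half of its value at `0`. -/
def halvingScale (m : ℕ) (C : ℝ) : ℝ := (2 + C * 2 ^ m)⁻¹

/-- The constant of the two-sided comparison of `φ 0` with `-φ 1`. -/
def endpointConst (m : ℕ) (C : ℝ) : ℝ := halvingScale m C ^ (m + 1) / (2 * (m + 1))

section Constants

variable {C : ℝ} (m : ℕ)

theorem halvingScale_pos (hC : 0 ≤ C) : 0 < halvingScale m C := by
  unfold halvingScale
  positivity

theorem halvingScale_le_half (hC : 0 ≤ C) : halvingScale m C ≤ 1 / 2 := by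
  rw [halvingScale, one_div]
  exact inv_anti₀ two_pos (le_add_of_nonneg_right (by positivity))

theorem mul_halvingScale_le_one (hC : 0 ≤ C) : C * 2 ^ m * halvingScale m C ≤ 1 := by
  rw [halvingScale, ← div_eq_mul_inv, div_le_one (by positivity)]
  exact le_add_of_nonneg_left two_pos.le

theorem halvingScale_mem_Ioo (hC : 0 ≤ C) : halvingScale m C ∈ Ioo 0 1 :=
  ⟨halvingScale_pos m hC, (halvingScale_le_half m hC).trans_lt one_half_lt_one⟩

theorem endpointConst_pos (hC : 0 ≤ C) : 0 < endpointConst m C :=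
  div_pos (pow_pos (halvingScale_pos m hC) _) (by positivity)

theorem endpointConst_le_one (hC : 0 ≤ C) : endpointConst m C ≤ 1 := by
  have hscale := halvingScale_mem_Ioo m hC
  refine div_le_one_of_le₀ ((pow_le_one₀ hscale.1.le hscale.2.le).trans ?_) (by positivity)
  have : (0 : ℝ) ≤ m := m.cast_nonneg
  linarith

end Constants

namespace NeumannSol

variable {m : ℕ} {w φ φd : ℝ → ℝ} {c C μ x : ℝ}

theorem deriv_neg (hs : NeumannSol w μ φ φd) (hw : ConeWeight m w) (hμ : 0 < μ)
    (hmin : ∀ μ', 0 < μ' → IsNeumannEigenvalue w μ' → μ ≤ μ') (h0 : 0 < φ 0)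
    (hx : x ∈ Ioo 0 1) : φd x < 0 := by
  have hne : ∀ y ∈ Ioo (0 : ℝ) 1, φd y ≠ 0 := fun y hy =>
    hs.deriv_ne_zero (hw.quasiMonotoneWeight hy)
      (hw.reflect.quasiMonotoneWeight ⟨sub_pos.2 hy.2, sub_lt_self 1 hy.1⟩) hμ hmin h0.ne'
  obtain ⟨d, ⟨hd0, hdx⟩, hpos⟩ := exists_Icc_forall_pos hx.1
    (hs.continuousOn.mono (Icc_subset_Icc_right hx.2.le)) h0
  have hd : d ∈ Ioo 0 1 := ⟨hd0, hdx.trans_lt hx.2⟩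
  have hφd_neg : φd d < 0 := by
    rw [hs.deriv_eq_neg_mul_flux (hw.quasiMonotoneWeight hd) hd.2, neg_lt_zero]
    exact mul_pos hμ ((hw.quasiMonotoneWeight hd).flux_pos
      (hs.continuousOn.mono (Icc_subset_Icc_right hd.2.le)) h0 fun y hy => (hpos y hy).le)
  by_contra! hφx
  obtain ⟨y, hy, hφy⟩ := isPreconnected_Ioo.intermediate_value hd hx
    (hs.2.1.mono Ioo_subset_Icc_self) ⟨hφd_neg.le, hφx⟩
  exact hne y hy hφy

theorem antitoneOn (hs : NeumannSol w μ φ φd) (hw : ConeWeight m w) (hμ : 0 < μ)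
    (hmin : ∀ μ', 0 < μ' → IsNeumannEigenvalue w μ' → μ ≤ μ') (h0 : 0 < φ 0) :
    AntitoneOn φ (Icc 0 1) := by
  refine antitoneOn_of_hasDerivWithinAt_nonpos (convex_Icc 0 1) hs.continuousOn
    (fun x hx => (hs.1 x (interior_subset hx)).mono interior_subset) fun x hx => ?_
  rw [interior_Icc] at hx
  exact (hs.deriv_neg hw hμ hmin h0 hx).le

theorem neg_deriv_le_of_le_half (hs : NeumannSol w μ φ φd) (hw : ConeWeight m w) (hμ : 0 ≤ μ)
    (hμC : μ ≤ C) (h0 : 0 < φ 0) (hanti : AntitoneOn φ (Icc 0 1)) (hx : x ∈ Ioc 0 (1 / 2)) :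
    -φd x ≤ C * 2 ^ m * φ 0 / 2 := by
  have hx1 : x < 1 := hx.2.trans_lt one_half_lt_one
  have hwx := hw.quasiMonotoneWeight ⟨hx.1, hx1⟩
  have hsub : Icc 0 x ⊆ Icc 0 1 := Icc_subset_Icc_right hx1.le
  have hflux : flux w φ x ≤ ((1 - x) ^ m)⁻¹ * φ 0 * x := by
    simpa using hwx.flux_le (hs.continuousOn.mono hsub) (k := 0) h0.le fun s hs' => by
      simpa using hanti (left_mem_Icc.2 zero_le_one) (hsub hs') hs'.1
  have hinv : ((1 - x) ^ m)⁻¹ ≤ 2 ^ m := by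
    rw [← inv_pow]
    exact pow_le_pow_left₀ (inv_nonneg.2 (sub_nonneg.2 hx1.le))
      (inv_le_of_inv_le₀ two_pos (by linarith [hx.2])) m
  have hC : 0 ≤ C := hμ.trans hμC
  calc -φd x = μ * flux w φ x := by rw [hs.deriv_eq_neg_mul_flux hwx hx1, neg_neg]
    _ ≤ μ * (((1 - x) ^ m)⁻¹ * φ 0 * x) := mul_le_mul_of_nonneg_left hflux hμ
    _ ≤ C * (2 ^ m * φ 0 * (1 / 2)) := by
      have := hx.1.le
      gcongr
      exact hx.2
    _ = C * 2 ^ m * φ 0 / 2 := by ring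

theorem half_le (hs : NeumannSol w μ φ φd) (hw : ConeWeight m w) (hμ : 0 ≤ μ)
    (hμC : μ ≤ C) (h0 : 0 < φ 0) (hanti : AntitoneOn φ (Icc 0 1))
    (hx : x ∈ Icc 0 (halvingScale m C)) : φ 0 / 2 ≤ φ x := by
  have hC : 0 ≤ C := hμ.trans hμC
  have hhalf : x ≤ 1 / 2 := hx.2.trans (halvingScale_le_half m hC)
  have hsub : Icc 0 x ⊆ Icc 0 1 := Icc_subset_Icc_right (hhalf.trans one_half_lt_one.le)
  have hmono : MonotoneOn (fun t => φ t + C * 2 ^ m * φ 0 / 2 * t) (Icc 0 x) := by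
    refine monotoneOn_of_hasDerivWithinAt_nonneg (convex_Icc 0 x)
      ((hs.continuousOn.mono hsub).add (by fun_prop))
      (fun t ht => ((hs.1 t (hsub (interior_subset ht))).mono (interior_subset.trans hsub)).add
        ((hasDerivWithinAt_id t _).const_mul _)) fun t ht => ?_
    rw [interior_Icc] at ht
    have := hs.neg_deriv_le_of_le_half hw hμ hμC h0 hanti ⟨ht.1, ht.2.le.trans hhalf⟩
    linarith
  have hle := hmono (left_mem_Icc.2 hx.1) (right_mem_Icc.2 hx.1) hx.1
  have hscale : C * 2 ^ m * x ≤ 1 :=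
    (mul_le_mul_of_nonneg_left hx.2 (by positivity)).trans (mul_halvingScale_le_one m hC)
  have := mul_le_mul_of_nonneg_right hscale h0.le
  simp only [mul_zero, add_zero] at hle
  linarith

theorem le_flux_of_le_halvingScale (hs : NeumannSol w μ φ φd) (hw : ConeWeight m w) (hμ : 0 ≤ μ)
    (hμC : μ ≤ C) (h0 : 0 < φ 0) (hanti : AntitoneOn φ (Icc 0 1))
    (hx : x ∈ Ioc 0 (halvingScale m C)) : φ 0 / 2 * x / (m + 1) ≤ flux w φ x := by
  have hx1 : x < 1 := hx.2.trans_lt (halvingScale_mem_Ioo m (hμ.trans hμC)).2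
  exact hw.mul_div_le_flux ⟨hx.1, hx1⟩ (hs.continuousOn.mono (Icc_subset_Icc_right hx1.le))
    (half_pos h0).le fun s hs' => hs.half_le hw hμ hμC h0 hanti ⟨hs'.1, hs'.2.trans hx.2⟩

theorem endpointConst_mul_le_flux (hs : NeumannSol w μ φ φd) (hw : ConeWeight m w) (hμ : 0 ≤ μ)
    (hμC : μ ≤ C) (h0 : 0 < φ 0) (hanti : AntitoneOn φ (Icc 0 1)) (hx : x ∈ Ioo 0 1)
    (hφx : 0 ≤ φ x) : endpointConst m C * x * φ 0 ≤ flux w φ x := by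
  have hwx := hw.quasiMonotoneWeight hx
  obtain ⟨hscale0, hscale1⟩ := halvingScale_mem_Ioo m (hμ.trans hμC)
  set y := min x (halvingScale m C)
  have hy0 : 0 < y := lt_min hx.1 hscale0
  have hyx : y ≤ x := min_le_left _ _
  have hmul_le : halvingScale m C * x ≤ y :=
    le_min (mul_le_of_le_one_left hx.1.le hscale1.le) (mul_le_of_le_one_right hscale0.le hx.2.le)
  have hflux_y := hs.le_flux_of_le_halvingScale hw hμ hμC h0 hanti
    (x := y) ⟨hy0, min_le_right _ _⟩
  have hmono : w y * flux w φ y ≤ w x * flux w φ x :=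
    hwx.mul_flux_le_mul_flux (hs.continuousOn.mono (Icc_subset_Icc_right hx.2.le))
      (fun s hs' => hφx.trans
        (hanti ⟨hs'.1, hs'.2.trans hx.2.le⟩ (Ioo_subset_Icc_self hx) hs'.2)) ⟨hy0.le, hyx⟩
  have hx0 : 0 < x := hx.1
  have hwx_pos : 0 < w x := hw.pos x hx
  refine le_of_mul_le_mul_left ?_ (mul_pos (pow_pos hx0 m) hwx_pos)
  calc x ^ m * w x * (endpointConst m C * x * φ 0)
      = w x * (halvingScale m C * x) ^ (m + 1) * (φ 0 / 2 / (m + 1)) := by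
        rw [endpointConst]; field_simp; ring
    _ ≤ w x * y ^ (m + 1) * (φ 0 / 2 / (m + 1)) := by gcongr
    _ = w x * y ^ m * (φ 0 / 2 * y / (m + 1)) := by ring
    _ ≤ w y * x ^ m * (φ 0 / 2 * y / (m + 1)) := by
        gcongr ?_ * _
        exact hw.mul_pow_le hy0 hyx hx.2
    _ = x ^ m * (w y * (φ 0 / 2 * y / (m + 1))) := by ring
    _ ≤ x ^ m * (w y * flux w φ y) := by
        have := hw.pos y ⟨hy0, hyx.trans_lt hx.2⟩
        gcongr
    _ ≤ x ^ m * (w x * flux w φ x) := by gcongr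
    _ = x ^ m * w x * flux w φ x := (mul_assoc _ _ _).symm

theorem endpointConst_mul_le_neg_deriv (hs : NeumannSol w μ φ φd) (hw : ConeWeight m w)
    (hc : 0 < c) (hcμ : c ≤ μ) (hμC : μ ≤ C) (h0 : 0 < φ 0) (hanti : AntitoneOn φ (Icc 0 1))
    (hx : x ∈ Ioo 0 1) (hφx : 0 ≤ φ x) : c * (endpointConst m C * x * φ 0) ≤ -φd x := by
  have hμ : 0 ≤ μ := hc.le.trans hcμ
  have hκ := endpointConst_pos m (hμ.trans hμC)
  rw [hs.deriv_eq_neg_mul_flux (hw.quasiMonotoneWeight hx) hx.2, neg_neg]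
  exact mul_le_mul hcμ (hs.endpointConst_mul_le_flux hw hμ hμC h0 hanti hx hφx)
    (mul_nonneg (mul_nonneg hκ.le hx.1.le) h0.le) hμ

theorem flux_eq_flux_reflect (hs : NeumannSol w μ φ φd) (hw : ConeWeight m w) (hμ : μ ≠ 0)
    (hx : x ∈ Ioo 0 1) :
    flux w φ x = flux (reflect w) (fun t => -reflect φ t) (1 - x) := by
  have hx' : 1 - x ∈ Ioo 0 1 := ⟨sub_pos.2 hx.2, sub_lt_self 1 hx.1⟩
  have hleft := hs.deriv_eq_neg_mul_flux (hw.quasiMonotoneWeight hx) hx.2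
  have hright := hs.neg_reflect.deriv_eq_neg_mul_flux (hw.reflect.quasiMonotoneWeight hx') hx'.2
  rw [reflect_one_sub, hleft] at hright
  exact mul_left_cancel₀ hμ (neg_injective hright)

theorem endpointConst_mul_le_neg_one (hs : NeumannSol w μ φ φd) (hw : ConeWeight m w)
    (hμ : 0 < μ) (hμC : μ ≤ C) (h0 : 0 < φ 0) (hanti : AntitoneOn φ (Icc 0 1)) :
    endpointConst m C * φ 0 ≤ -φ 1 := by
  have hC : 0 ≤ C := hμ.le.trans hμC
  set y := halvingScale m C with hy_def
  have hy : y ∈ Ioo 0 1 := halvingScale_mem_Ioo m hC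
  have hy' : 1 - y ∈ Ioo 0 1 := ⟨sub_pos.2 hy.2, sub_lt_self 1 hy.1⟩
  have hsub : Icc 0 (1 - y) ⊆ Icc 0 1 := Icc_subset_Icc_right hy'.2.le
  have hupper : flux w φ y ≤ (y ^ m)⁻¹ * max 0 (-φ 1) * (1 - y) := by
    rw [hs.flux_eq_flux_reflect hw hμ.ne' hy]
    simpa using (hw.reflect.quasiMonotoneWeight hy').flux_le (k := 0)
      (hs.neg_reflect.continuousOn.mono hsub) (le_max_left 0 (-φ 1)) fun s hs' => by
        have := antitoneOn_neg_reflect hanti (left_mem_Icc.2 zero_le_one) (hsub hs') hs'.1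
        simpa [reflect] using Or.inr this
  have hlower := hs.le_flux_of_le_halvingScale hw hμ.le hμC h0 hanti (x := y) ⟨hy.1, le_rfl⟩
  have hpos : 0 < endpointConst m C * φ 0 := mul_pos (endpointConst_pos m hC) h0
  have hmax : endpointConst m C * φ 0 ≤ max 0 (-φ 1) := by
    calc endpointConst m C * φ 0 = y ^ m * (φ 0 / 2 * y / (m + 1)) := by
          rw [endpointConst, ← hy_def]; field_simp; ring
      _ ≤ y ^ m * ((y ^ m)⁻¹ * max 0 (-φ 1) * (1 - y)) :=
          mul_le_mul_of_nonneg_left (hlower.trans hupper) (pow_pos hy.1 m).le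
      _ = max 0 (-φ 1) * (1 - y) := by have := (pow_pos hy.1 m).ne'; field_simp
      _ ≤ max 0 (-φ 1) := mul_le_of_le_one_right (le_max_left _ _) hy'.2.le
  exact (le_max_iff.1 hmax).resolve_left hpos.not_ge

theorem endpointConst_mul_neg_one_le (hs : NeumannSol w μ φ φd) (hw : ConeWeight m w)
    (hμ : 0 < μ) (hμC : μ ≤ C) (h1 : 0 < -φ 1) (hanti : AntitoneOn φ (Icc 0 1)) :
    endpointConst m C * -φ 1 ≤ φ 0 := by
  simpa [reflect] using hs.neg_reflect.endpointConst_mul_le_neg_one hw.reflect hμ hμC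
    (by simpa [reflect] using h1) (antitoneOn_neg_reflect hanti)

theorem endpointConst_sq_mul_le_neg_deriv (hs : NeumannSol w μ φ φd) (hw : ConeWeight m w)
    (hc : 0 < c) (hcμ : c ≤ μ) (hμC : μ ≤ C) (h0 : 0 < φ 0) (hanti : AntitoneOn φ (Icc 0 1))
    {δ : ℝ} (hδ : 0 < δ) (hx : x ∈ Icc δ (1 - δ)) :
    c * (endpointConst m C ^ 2 * δ) * φ 0 ≤ -φd x := by
  have hμ : 0 < μ := hc.trans_le hcμ
  have hC : 0 ≤ C := hμ.le.trans hμC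
  have hx01 : x ∈ Ioo 0 1 := ⟨hδ.trans_le hx.1, hx.2.trans_lt (sub_lt_self 1 hδ)⟩
  have hend := hs.endpointConst_mul_le_neg_one hw hμ hμC h0 hanti
  set κ := endpointConst m C
  have hκ : 0 < κ := endpointConst_pos m hC
  rcases le_total 0 (φ x) with hφx | hφx
  · calc c * (κ ^ 2 * δ) * φ 0 = c * (κ * (κ * δ) * φ 0) := by ring
      _ ≤ c * (κ * x * φ 0) := by
        gcongr
        exact (mul_le_of_le_one_left hδ.le (endpointConst_le_one m hC)).trans hx.1
      _ ≤ -φd x := hs.endpointConst_mul_le_neg_deriv hw hc hcμ hμC h0 hanti hx01 hφx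
  · have hφ1 : 0 < -φ 1 := (mul_pos hκ h0).trans_le hend
    have hright := hs.neg_reflect.endpointConst_mul_le_neg_deriv (x := 1 - x) hw.reflect hc hcμ hμC
      (by simpa [reflect] using hφ1) (antitoneOn_neg_reflect hanti)
      ⟨sub_pos.2 hx01.2, sub_lt_self 1 hx01.1⟩ (by simpa [reflect] using hφx)
    have hδx : δ ≤ 1 - x := le_sub_comm.1 hx.2
    calc c * (κ ^ 2 * δ) * φ 0 = c * (κ * δ * (κ * φ 0)) := by ring
      _ ≤ c * (κ * (1 - x) * -φ 1) := by
        have := hδ.trans_le hδx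
        gcongr
      _ ≤ -φd x := by simpa [reflect] using hright

end NeumannSol

theorem ode_eigenfunction_reverse_gradient_general (m : ℕ) {c C : ℝ} (hc : 0 < c) (hcC : c ≤ C) :
    ∃ c' > (0 : ℝ), ∃ C' > (0 : ℝ), ∀ δ : ℝ, 0 < δ → ∃ cδ > (0 : ℝ),
    ∀ (w φ φd : ℝ → ℝ) (μ : ℝ), ConeWeight m w → NeumannSol w μ φ φd →
      (∀ μ', 0 < μ' → IsNeumannEigenvalue w μ' → μ ≤ μ') → 0 < φ 0 → c ≤ μ → μ ≤ C →
      (c' * φ 0 ≤ -φ 1 ∧ -φ 1 ≤ C' * φ 0) ∧ ∀ x ∈ Icc δ (1 - δ), cδ * φ 0 ≤ -φd x := by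
  have hκ := endpointConst_pos m (hc.le.trans hcC)
  refine ⟨endpointConst m C, hκ, (endpointConst m C)⁻¹, inv_pos.2 hκ, fun δ hδ =>
    ⟨c * (endpointConst m C ^ 2 * δ), by positivity, fun w φ φd μ hw hs hmin h0 hcμ hμC => ?_⟩⟩
  have hμ : 0 < μ := hc.trans_le hcμ
  have hanti := hs.antitoneOn hw hμ hmin h0
  have hend := hs.endpointConst_mul_le_neg_one hw hμ hμC h0 hanti
  refine ⟨⟨hend, ?_⟩, fun x hx => hs.endpointConst_sq_mul_le_neg_deriv hw hc hcμ hμC h0 hanti hδ hx⟩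
  rw [le_inv_mul_iff₀ hκ]
  exact hs.endpointConst_mul_neg_one_le hw hμ hμC ((mul_pos hκ h0).trans_le hend) hanti

/-- `c φ(0) ≤ -φ(1) ≤ C φ(0)`, and the reverse gradient estimate
`-φ'(x) ≥ c_δ φ(0)` for `δ ≤ x ≤ 1 - δ`. -/
theorem ode_eigenfunction_reverse_gradient
    (m : ℕ) (hm : 1 ≤ m) (cμ Cμ : ℝ) (hcμ : 0 < cμ) (hCμ : cμ ≤ Cμ) :
    ∃ c' > (0:ℝ), ∃ C' > (0:ℝ), ∀ δ : ℝ, 0 < δ → δ < 1/2 → ∃ cδ > (0:ℝ),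
    ∀ (Ω : Set (EuclideanSpace ℝ (Fin (m+1)))) (φ φd : ℝ → ℝ) (μ : ℝ),
      IsOpen Ω → Convex ℝ Ω → Bornology.IsBounded Ω →
      -- Ω ⊆ (0,1) × ℝ^{n-1}
      (∀ x y, mkPt m x y ∈ Ω → x ∈ Ioo (0:ℝ) 1) →
      -- nonempty cross-sections
      (∀ s ∈ Ioo (0:ℝ) 1, (cross Ω s).Nonempty) →
      -- φ is a first Neumann eigenfunction of -(ωφ')' = μωφ, with φ(0) > 0
      NeumannSol (ωvol Ω) μ φ φd →
      0 < μ →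
      (∀ μ', 0 < μ' → IsNeumannEigenvalue (ωvol Ω) μ' → μ ≤ μ') →
      (∫ x in (0:ℝ)..1, ωvol Ω x * φ x) = 0 →
      0 < φ 0 →
      -- uniform bounds on μ, assumed as hypotheses
      cμ ≤ μ → μ ≤ Cμ →
      (c' * φ 0 ≤ -φ 1 ∧ -φ 1 ≤ C' * φ 0) ∧
      (∀ x ∈ Icc δ (1 - δ), cδ * φ 0 ≤ -φd x) := by
  obtain ⟨c', hc', C', hC', hgrad⟩ := ode_eigenfunction_reverse_gradient_general m hcμ hCμ
  refine ⟨c', hc', C', hC', fun δ hδ _ => ?_⟩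
  obtain ⟨cδ, hcδ, hbound⟩ := hgrad δ hδ
  exact ⟨cδ, hcδ, fun Ω φ φd μ hopen hconv hbdd _ hne hs _ hmin _ =>
    hbound (ωvol Ω) φ φd μ (coneWeight_ωvol hopen hconv hbdd hne) hs hmin⟩
end
end

section
/- Suppose ω : [0,1] → ℝ is continuous, ω(x) > 0 for all x ∈ (0,1), and either (a) ω(0) > 0, or (b) ω(0) = 0 and ω is monotone increasing on some interval [0, δ] with δ > 0. Then for every μ > 0 there exists a unique φ ∈ C¹([0,1)) with φ(0) = 1 and φ'(0) = 0 satisfying, for all x ∈ (0,1), φ(x) = 1 + ∫_0^x φ'(s) ds and φ'(x) = −(1/ω(x)) ∫_0^x μ ω(s) φ(s) ds (equivalently, ω φ' is differentiable on (0,1) with (ω(x) φ'(x))' = −μ ω(x) φ(x)). Moreover, for each fixed x, the value φ(x) depends continuously on μ. -/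
/-!
A solution `φ` is a fixed point of `φ = 1 - μ K φ`, where `K f (x) = ∫₀ˣ (1/ω(t)) ∫₀ᵗ ω f ds dt`.
The singularity of `1/ω` at `0` is harmless as soon as `ω(s) ≤ C ω(t)` for `s ≤ t`: the inner
quotient is then at most `C t sup |f|`, and `K` behaves like the double integral that it is for
`ω = 1`, with `|Kⁿ f (x)| ≤ sup |f| (C x²)ⁿ / (2n)!`. Hence the Neumann series `∑ (-μ)ⁿ Kⁿ 1`
converges locally uniformly in `x` and in `μ`, which gives existence and continuous dependence,
and the difference of two fixed points equals its image under `(-μ K)ⁿ`, which tends to `0`.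
-/

open MeasureTheory Set Filter Topology

noncomputable section

/-- `(φ, φd)` is a C¹ solution on `[0,1)` of the (possibly singular) initial value problem
`φ(0) = 1`, `φ'(0) = 0`, `φ(x) = 1 + ∫₀ˣ φ'` and `φ'(x) = -(1/ω(x)) ∫₀ˣ μ ω φ` on `(0,1)`. -/
def PicardSol (ω : ℝ → ℝ) (μ : ℝ) (φ φd : ℝ → ℝ) : Prop :=
  (∀ x ∈ Ico (0:ℝ) 1, HasDerivWithinAt φ (φd x) (Ico 0 1) x) ∧
  ContinuousOn φd (Ico 0 1) ∧
  φ 0 = 1 ∧ φd 0 = 0 ∧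
  ∀ x ∈ Ioo (0:ℝ) 1,
    φ x = 1 + (∫ s in (0:ℝ)..x, φd s) ∧
    φd x = -(1 / ω x) * ∫ s in (0:ℝ)..x, μ * ω s * φ s

open scoped NNReal

/-! ### Almost monotone weights -/

/-- `f` is almost increasing on `s` with constant `C`: its values drop by at most the factor `C`
to the right. -/
def AlmostMonotoneOn {α : Type*} [Preorder α] (C : ℝ≥0) (f : α → ℝ) (s : Set α) : Prop :=
  ∀ ⦃x⦄, x ∈ s → ∀ ⦃y⦄, y ∈ s → x ≤ y → f x ≤ C * f y

lemma exists_almostMonotoneOn_of_monotoneOn {f : ℝ → ℝ} {a e b : ℝ} (hae : a ≤ e) (heb : e ≤ b)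
    (hcont : ContinuousOn f (Icc a b)) (hmono : MonotoneOn f (Icc a e)) (ha : 0 ≤ f a)
    (hpos : ∀ x ∈ Icc e b, 0 < f x) : ∃ C, AlmostMonotoneOn C f (Icc a b) := by
  obtain ⟨z, hz, hz_min⟩ := isCompact_Icc.exists_isMinOn (nonempty_Icc.2 heb)
    (hcont.mono (Icc_subset_Icc_left hae))
  obtain ⟨w, -, hw_max⟩ := isCompact_Icc.exists_isMaxOn (nonempty_Icc.2 (hae.trans heb)) hcont
  have hfz : 0 < f z := hpos z hz
  have hzw : f z ≤ f w := hw_max ⟨hae.trans hz.1, hz.2⟩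
  refine ⟨⟨f w / f z, div_nonneg (hfz.le.trans hzw) hfz.le⟩, fun x hx y hy hxy => ?_⟩
  change f x ≤ f w / f z * f y
  rcases le_total y e with hye | hey
  · have hfy : 0 ≤ f y := ha.trans (hmono ⟨le_rfl, hae⟩ ⟨hy.1, hye⟩ hy.1)
    calc f x ≤ f y := hmono ⟨hx.1, hxy.trans hye⟩ ⟨hy.1, hye⟩ hxy
      _ ≤ f w / f z * f y := le_mul_of_one_le_left hfy ((one_le_div hfz).2 hzw)
  · calc f x ≤ f w := hw_max hx
      _ = f w / f z * f z := (div_mul_cancel₀ _ hfz.ne').symm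
      _ ≤ f w / f z * f y := by
        have : 0 ≤ f w / f z := div_nonneg (hfz.le.trans hzw) hfz.le
        gcongr
        exact hz_min ⟨hey, hy.2⟩

/-- A class of weights on `[0,R)` whose initial value problem at `0` is well posed. The
constant in the almost monotonicity may blow up at `R`, and `ω 0 = 0` is allowed. -/
structure SingularWeight (ω : ℝ → ℝ) (R : ℝ) : Prop where
  continuousOn : ContinuousOn ω (Ico 0 R)
  pos : ∀ x ∈ Ioo 0 R, 0 < ω x
  exists_almostMonotoneOn : ∀ b < R, ∃ C, AlmostMonotoneOn C ω (Ioc 0 b)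

lemma SingularWeight.of_continuousOn_Icc {ω : ℝ → ℝ} {R : ℝ} (hcont : ContinuousOn ω (Icc 0 R))
    (hpos : ∀ x ∈ Ioo 0 R, 0 < ω x)
    (hzero : 0 < ω 0 ∨ (ω 0 = 0 ∧ ∃ δ > 0, MonotoneOn ω (Icc 0 δ))) : SingularWeight ω R where
  continuousOn := hcont.mono Ico_subset_Icc_self
  pos := hpos
  exists_almostMonotoneOn b hb := by
    rcases le_or_gt b 0 with hb0 | hb0
    · exact ⟨0, fun x hx => absurd hx.1 (hx.2.trans hb0).not_gt⟩
    have hcont_b : ContinuousOn ω (Icc 0 b) := hcont.mono (Icc_subset_Icc_right hb.le)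
    suffices ∃ C, AlmostMonotoneOn C ω (Icc 0 b) from this.imp fun C hC x hx y hy =>
      hC (Ioc_subset_Icc_self hx) (Ioc_subset_Icc_self hy)
    rcases hzero with h0 | ⟨h0, δ, hδ, hmono⟩
    · refine exists_almostMonotoneOn_of_monotoneOn le_rfl hb0.le hcont_b ?_ h0.le fun x hx => ?_
      · exact subsingleton_Icc_of_ge le_rfl |>.monotoneOn ω
      · rcases hx.1.eq_or_lt with rfl | hx0
        exacts [h0, hpos x ⟨hx0, hx.2.trans_lt hb⟩]
    · exact exists_almostMonotoneOn_of_monotoneOn (lt_min hδ hb0).le (min_le_right δ b) hcont_b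
        (hmono.mono (Icc_subset_Icc_right (min_le_left δ b))) h0.ge
        fun x hx => hpos x ⟨(lt_min hδ hb0).trans_le hx.1, hx.2.trans_lt hb⟩

/-! ### Integration on half-open intervals -/

lemma Icc_mem_nhdsWithin_Ico {α : Type*} [TopologicalSpace α] [LinearOrder α] [ClosedIciTopology α]
    {a b c x : α} (hxb : x < b) : Icc a b ∈ 𝓝[Ico a c] x := by
  filter_upwards [mem_nhdsWithin_of_mem_nhds (Iio_mem_nhds hxb), self_mem_nhdsWithin] with y hyb hy
  exact ⟨hy.1, hyb.le⟩

section HalfOpen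

variable {E : Type*} [NormedAddCommGroup E] {f : ℝ → E} {a c x : ℝ}

lemma intervalIntegrable_of_continuousOn_Ico (hf : ContinuousOn f (Ico a c)) (hx : x ∈ Ico a c) :
    IntervalIntegrable f volume a x := by
  apply ContinuousOn.intervalIntegrable
  rw [uIcc_of_le hx.1]
  exact hf.mono (Icc_subset_Ico_right hx.2)

lemma hasDerivWithinAt_integral_of_continuousOn_Ico [NormedSpace ℝ E] [CompleteSpace E]
    (hf : ContinuousOn f (Ico a c)) (hx : x ∈ Ico a c) :
    HasDerivWithinAt (fun u => ∫ t in a..u, f t) (f x) (Ico a c) x := by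
  obtain ⟨b, hxb, hbc⟩ := exists_between hx.2
  have hf_Icc : ContinuousOn f (Icc a b) := hf.mono (Icc_subset_Ico_right hbc)
  have hx_Icc : x ∈ Icc a b := ⟨hx.1, hxb.le⟩
  have : Fact (x ∈ Icc a b) := ⟨hx_Icc⟩
  exact (intervalIntegral.integral_hasDerivWithinAt_right
    (intervalIntegrable_of_continuousOn_Ico hf hx)
    (hf_Icc.stronglyMeasurableAtFilter_nhdsWithin measurableSet_Icc x)
    (hf_Icc x hx_Icc)).mono_of_mem_nhdsWithin (Icc_mem_nhdsWithin_Ico hxb)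

lemma hasSum_intervalIntegral_of_norm_le [NormedSpace ℝ E] {ι : Type*} [Countable ι]
    {F : ι → ℝ → E} {u : ι → ℝ} (hF : ∀ n, IntervalIntegrable (F n) volume a x)
    (hu : Summable u) (hFu : ∀ n, ∀ t ∈ uIoc a x, ‖F n t‖ ≤ u n)
    (hsum : ∀ t ∈ uIoc a x, HasSum (fun n => F n t) (f t)) :
    HasSum (fun n => ∫ t in a..x, F n t) (∫ t in a..x, f t) :=
  intervalIntegral.hasSum_integral_of_dominated_convergence (fun n _ => u n)
    (fun n => (hF n).def'.aestronglyMeasurable) (fun n => .of_forall (hFu n))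
    (.of_forall fun _ _ => hu) intervalIntegrable_const (.of_forall hsum)

end HalfOpen

/-! ### The Volterra operator of a weight -/

/-- The inner quotient `(1/ω(t)) ∫₀ᵗ ω f`: if `-(ω φ')' = μ ω φ` and `ω φ'` vanishes at `0`, then
`φ' = -μ` times this quotient for `f = φ`. At `t = 0` it is `0`, even where `ω 0 = 0`. -/
def normalizedFlux (ω f : ℝ → ℝ) (t : ℝ) : ℝ := (ω t)⁻¹ * ∫ s in (0 : ℝ)..t, ω s * f s

/-- The Volterra operator `K`, the solution operator of `(ω g')' = ω f`, `g(0) = 0`, `g'(0) = 0`. -/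
def volterra (ω f : ℝ → ℝ) (x : ℝ) : ℝ := ∫ t in (0 : ℝ)..x, normalizedFlux ω f t

/-- The Neumann series `∑ cⁿ Kⁿ h`, the solution of `φ = h + c K φ`. -/
def neumannSeries (ω h : ℝ → ℝ) (c x : ℝ) : ℝ := ∑' n : ℕ, c ^ n * (volterra ω)^[n] h x

@[simp] lemma normalizedFlux_zero (ω f : ℝ → ℝ) : normalizedFlux ω f 0 = 0 := by
  simp [normalizedFlux]

@[simp] lemma volterra_zero (ω f : ℝ → ℝ) : volterra ω f 0 = 0 :=
  intervalIntegral.integral_same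

lemma normalizedFlux_const_mul (ω f : ℝ → ℝ) (c t : ℝ) :
    normalizedFlux ω (fun s => c * f s) t = c * normalizedFlux ω f t := by
  simp only [normalizedFlux, mul_left_comm _ c, intervalIntegral.integral_const_mul]

lemma volterra_const_mul (ω f : ℝ → ℝ) (c x : ℝ) :
    volterra ω (fun s => c * f s) x = c * volterra ω f x := by
  simp only [volterra, normalizedFlux_const_mul, intervalIntegral.integral_const_mul]

lemma normalizedFlux_congr {ω f g : ℝ → ℝ} {t : ℝ} (h : EqOn f g (uIcc 0 t)) :
    normalizedFlux ω f t = normalizedFlux ω g t := by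
  unfold normalizedFlux
  rw [intervalIntegral.integral_congr fun s hs => congrArg (ω s * ·) (h hs)]

lemma volterra_congr {ω f g : ℝ → ℝ} {x : ℝ} (h : EqOn f g (uIcc 0 x)) :
    volterra ω f x = volterra ω g x :=
  intervalIntegral.integral_congr fun _ ht =>
    normalizedFlux_congr (h.mono (uIcc_subset_uIcc_left ht))

namespace SingularWeight

variable {ω f g h : ℝ → ℝ} {R b x : ℝ}

lemma abs_mul_le (hω : SingularWeight ω R) (hb : b < R) {C : ℝ≥0}
    (hC : AlmostMonotoneOn C ω (Ioc 0 b)) {s t y B : ℝ} (hs : 0 < s) (hst : s ≤ t) (htb : t ≤ b)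
    (hy : |y| ≤ B) : |ω s * y| ≤ C * ω t * B := by
  have hωs : 0 < ω s := hω.pos s ⟨hs, (hst.trans htb).trans_lt hb⟩
  have hωst : ω s ≤ C * ω t := hC ⟨hs, hst.trans htb⟩ ⟨hs.trans_le hst, htb⟩ hst
  rw [abs_mul, abs_of_pos hωs]
  exact mul_le_mul hωst hy (abs_nonneg y) (hωs.le.trans hωst)

lemma abs_normalizedFlux_le (hω : SingularWeight ω R) (hb : b < R) {C : ℝ≥0}
    (hC : AlmostMonotoneOn C ω (Ioc 0 b)) {A : ℝ} {k : ℕ}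
    (hf : ∀ s ∈ Icc 0 b, |f s| ≤ A * s ^ k) {t : ℝ} (ht : t ∈ Icc 0 b) :
    |normalizedFlux ω f t| ≤ C * A / (k + 1) * t ^ (k + 1) := by
  rcases ht.1.eq_or_lt with rfl | ht0
  · simp
  have hωt : 0 < ω t := hω.pos t ⟨ht0, ht.2.trans_lt hb⟩
  have hintegrand : ∀ s ∈ Ioc 0 t, ‖ω s * f s‖ ≤ C * ω t * (A * s ^ k) := fun s hs =>
    hω.abs_mul_le hb hC hs.1 hs.2 ht.2 (hf s ⟨hs.1.le, hs.2.trans ht.2⟩)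
  have hintegral : ‖∫ s in (0 : ℝ)..t, ω s * f s‖ ≤ ∫ s in (0 : ℝ)..t, C * ω t * (A * s ^ k) :=
    intervalIntegral.norm_integral_le_of_norm_le ht.1 (.of_forall hintegrand)
      (Continuous.intervalIntegrable (by fun_prop) 0 t)
  calc |normalizedFlux ω f t| = (ω t)⁻¹ * ‖∫ s in (0 : ℝ)..t, ω s * f s‖ := by
        rw [normalizedFlux, abs_mul, abs_of_pos (inv_pos.2 hωt), Real.norm_eq_abs]
    _ ≤ (ω t)⁻¹ * ∫ s in (0 : ℝ)..t, C * ω t * (A * s ^ k) := by gcongr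
    _ = C * A / (k + 1) * t ^ (k + 1) := by
        rw [intervalIntegral.integral_const_mul, intervalIntegral.integral_const_mul,
          integral_pow, zero_pow k.succ_ne_zero]
        field_simp
        ring

lemma abs_volterra_le (hω : SingularWeight ω R) (hb : b < R) {C : ℝ≥0}
    (hC : AlmostMonotoneOn C ω (Ioc 0 b)) {A : ℝ} {k : ℕ}
    (hf : ∀ s ∈ Icc 0 b, |f s| ≤ A * s ^ k) (hx : x ∈ Icc 0 b) :
    |volterra ω f x| ≤ C * A / ((k + 1) * (k + 2)) * x ^ (k + 2) := by
  have hflux : ∀ t ∈ Ioc 0 x, ‖normalizedFlux ω f t‖ ≤ C * A / (k + 1) * t ^ (k + 1) :=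
    fun t ht => hω.abs_normalizedFlux_le hb hC hf ⟨ht.1.le, ht.2.trans hx.2⟩
  calc |volterra ω f x| ≤ ∫ t in (0 : ℝ)..x, C * A / (k + 1) * t ^ (k + 1) :=
        intervalIntegral.norm_integral_le_of_norm_le hx.1 (.of_forall hflux)
          (Continuous.intervalIntegrable (by fun_prop) 0 x)
    _ = C * A / ((k + 1) * (k + 2)) * x ^ (k + 2) := by
        rw [intervalIntegral.integral_const_mul, integral_pow, zero_pow (k + 1).succ_ne_zero]
        push_cast
        field_simp
        ring

lemma abs_iterate_volterra_le (hω : SingularWeight ω R) (hb : b < R) {C : ℝ≥0}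
    (hC : AlmostMonotoneOn C ω (Ioc 0 b)) {M : ℝ} (hf : ∀ s ∈ Icc 0 b, |f s| ≤ M) (n : ℕ) :
    ∀ x ∈ Icc 0 b, |(volterra ω)^[n] f x| ≤ M * C ^ n / (2 * n).factorial * x ^ (2 * n) := by
  induction n with
  | zero => simpa using hf
  | succ n ih =>
    intro x hx
    rw [Function.iterate_succ_apply']
    refine (hω.abs_volterra_le hb hC ih hx).trans_eq ?_
    rw [mul_add_one, Nat.factorial_succ, Nat.factorial_succ]
    push_cast
    field_simp
    ring

lemma continuousOn_normalizedFlux (hω : SingularWeight ω R) (hf : ContinuousOn f (Ico 0 R)) :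
    ContinuousOn (normalizedFlux ω f) (Ico 0 R) := by
  intro x hx
  rcases hx.1.eq_or_lt with rfl | hx0
  · obtain ⟨b, hb0, hbR⟩ := exists_between hx.2
    obtain ⟨C, hC⟩ := hω.exists_almostMonotoneOn b hbR
    obtain ⟨M, hM⟩ := isCompact_Icc.exists_bound_of_continuousOn
      (hf.mono (Icc_subset_Ico_right hbR))
    have hbound : ∀ᶠ t in 𝓝[Ico 0 R] 0, ‖normalizedFlux ω f t‖ ≤ C * M * t := by
      filter_upwards [Icc_mem_nhdsWithin_Ico hb0] with t ht
      simpa using hω.abs_normalizedFlux_le hbR hC (A := M) (k := 0) (by simpa using hM) ht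
    have hlim : Tendsto (fun t : ℝ => C * M * t) (𝓝[Ico 0 R] 0) (𝓝 0) :=
      ((continuous_const_mul (C * M)).tendsto' 0 0 (mul_zero _)).mono_left nhdsWithin_le_nhds
    simpa only [ContinuousWithinAt, normalizedFlux_zero] using squeeze_zero_norm' hbound hlim
  · exact ((hω.continuousOn x hx).inv₀ (hω.pos x ⟨hx0, hx.2⟩).ne').mul
      (hasDerivWithinAt_integral_of_continuousOn_Ico
        (hω.continuousOn.fun_mul hf) hx).continuousWithinAt

lemma hasDerivWithinAt_volterra (hω : SingularWeight ω R) (hf : ContinuousOn f (Ico 0 R))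
    (hx : x ∈ Ico 0 R) :
    HasDerivWithinAt (volterra ω f) (normalizedFlux ω f x) (Ico 0 R) x :=
  hasDerivWithinAt_integral_of_continuousOn_Ico (hω.continuousOn_normalizedFlux hf) hx

lemma continuousOn_iterate_volterra (hω : SingularWeight ω R) (hf : ContinuousOn f (Ico 0 R))
    (n : ℕ) : ContinuousOn ((volterra ω)^[n] f) (Ico 0 R) := by
  induction n with
  | zero => exact hf
  | succ n ih =>
    rw [Function.iterate_succ_apply']
    exact fun x hx => (hω.hasDerivWithinAt_volterra ih hx).continuousWithinAt

lemma normalizedFlux_sub (hω : SingularWeight ω R) (hf : ContinuousOn f (Ico 0 R))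
    (hg : ContinuousOn g (Ico 0 R)) (hx : x ∈ Ico 0 R) :
    normalizedFlux ω (f - g) x = normalizedFlux ω f x - normalizedFlux ω g x := by
  simp only [normalizedFlux, Pi.sub_apply, mul_sub]
  rw [intervalIntegral.integral_sub
    (intervalIntegrable_of_continuousOn_Ico (hω.continuousOn.fun_mul hf) hx)
    (intervalIntegrable_of_continuousOn_Ico (hω.continuousOn.fun_mul hg) hx), mul_sub]

lemma volterra_sub (hω : SingularWeight ω R) (hf : ContinuousOn f (Ico 0 R))
    (hg : ContinuousOn g (Ico 0 R)) (hx : x ∈ Ico 0 R) :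
    volterra ω (f - g) x = volterra ω f x - volterra ω g x := by
  have hflux : EqOn (normalizedFlux ω (f - g))
      (fun t => normalizedFlux ω f t - normalizedFlux ω g t) (uIcc 0 x) := fun t ht => by
    rw [uIcc_of_le hx.1] at ht
    exact hω.normalizedFlux_sub hf hg (Icc_subset_Ico_right hx.2 ht)
  rw [volterra, intervalIntegral.integral_congr hflux]
  exact intervalIntegral.integral_sub
    (intervalIntegrable_of_continuousOn_Ico (hω.continuousOn_normalizedFlux hf) hx)
    (intervalIntegrable_of_continuousOn_Ico (hω.continuousOn_normalizedFlux hg) hx)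

section Series

variable {F : ℕ → ℝ → ℝ} {u : ℕ → ℝ}

lemma hasSum_normalizedFlux (hω : SingularWeight ω R) (hF : ∀ n, ContinuousOn (F n) (Ico 0 R))
    (hu : Summable u) (hx : x ∈ Ico 0 R) (hFu : ∀ n, ∀ s ∈ Icc 0 x, ‖F n s‖ ≤ u n) :
    HasSum (fun n => normalizedFlux ω (F n) x) (normalizedFlux ω (fun s => ∑' n, F n s) x) := by
  obtain ⟨C, hC⟩ := hω.exists_almostMonotoneOn x hx.2
  have hsub : uIoc 0 x ⊆ Ioc 0 x := (uIoc_of_le hx.1).subset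
  refine (hasSum_intervalIntegral_of_norm_le (u := fun n => C * ω x * u n)
    (fun n => intervalIntegrable_of_continuousOn_Ico (hω.continuousOn.fun_mul (hF n)) hx)
    (hu.mul_left _) (fun n s hs => ?_) fun s hs => ?_).mul_left _
  · exact hω.abs_mul_le hx.2 hC (hsub hs).1 (hsub hs).2 le_rfl
      (hFu n s (Ioc_subset_Icc_self (hsub hs)))
  · exact (Summable.of_norm_bounded hu fun n =>
      hFu n s (Ioc_subset_Icc_self (hsub hs))).hasSum.mul_left (ω s)

lemma hasSum_volterra (hω : SingularWeight ω R) (hF : ∀ n, ContinuousOn (F n) (Ico 0 R))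
    (hu : Summable u) (hx : x ∈ Ico 0 R) (hFu : ∀ n, ∀ s ∈ Icc 0 x, ‖F n s‖ ≤ u n) :
    HasSum (fun n => volterra ω (F n) x) (volterra ω (fun s => ∑' n, F n s) x) := by
  obtain ⟨C, hC⟩ := hω.exists_almostMonotoneOn x hx.2
  have hsub : uIoc 0 x ⊆ Icc 0 x := (uIoc_of_le hx.1).subset.trans Ioc_subset_Icc_self
  refine hasSum_intervalIntegral_of_norm_le (u := fun n => C * u n * x)
    (fun n => intervalIntegrable_of_continuousOn_Ico (hω.continuousOn_normalizedFlux (hF n)) hx)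
    ((hu.mul_left _).mul_right x) (fun n t ht => ?_) fun t ht => ?_
  · have hflux := hω.abs_normalizedFlux_le hx.2 hC (A := u n) (k := 0)
      (by simpa using hFu n) (hsub ht)
    have hu0 : 0 ≤ u n := (norm_nonneg _).trans (hFu n t (hsub ht))
    calc ‖normalizedFlux ω (F n) t‖ ≤ C * u n * t := by simpa using hflux
      _ ≤ C * u n * x := by gcongr; exact (hsub ht).2
  · exact hω.hasSum_normalizedFlux hF hu (Icc_subset_Ico_right hx.2 (hsub ht))
      fun n s hs => hFu n s ⟨hs.1, hs.2.trans (hsub ht).2⟩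

end Series

/-! ### The Neumann series -/

lemma exists_summable_bound_pow_mul_iterate_volterra (hω : SingularWeight ω R)
    (hh : ContinuousOn h (Ico 0 R)) (hb : b < R) (r : ℝ) :
    ∃ u : ℕ → ℝ, Summable u ∧ ∀ c, |c| ≤ r → ∀ n, ∀ x ∈ Icc 0 b,
      ‖c ^ n * (volterra ω)^[n] h x‖ ≤ u n := by
  obtain ⟨C, hC⟩ := hω.exists_almostMonotoneOn b hb
  obtain ⟨M, hM⟩ := isCompact_Icc.exists_bound_of_continuousOn (hh.mono (Icc_subset_Ico_right hb))
  refine ⟨fun n => M * ((r * C * b ^ 2) ^ n / n.factorial),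
    (Real.summable_pow_div_factorial _).mul_left M, fun c hc n x hx => ?_⟩
  have hx0 : 0 ≤ x := hx.1
  have hM0 : 0 ≤ M := (norm_nonneg _).trans (hM x hx)
  have hr0 : 0 ≤ r := (abs_nonneg c).trans hc
  calc ‖c ^ n * (volterra ω)^[n] h x‖ = |c| ^ n * |(volterra ω)^[n] h x| := by
        rw [norm_mul, norm_pow, Real.norm_eq_abs, Real.norm_eq_abs]
    _ ≤ r ^ n * (M * C ^ n / (2 * n).factorial * x ^ (2 * n)) := by
        gcongr
        exact hω.abs_iterate_volterra_le hb hC hM n x hx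
    _ ≤ r ^ n * (M * C ^ n / n.factorial * b ^ (2 * n)) := by
        gcongr
        exacts [Nat.le_mul_of_pos_left n two_pos, hx.2]
    _ = M * ((r * C * b ^ 2) ^ n / n.factorial) := by ring

lemma continuousOn_neumannSeries (hω : SingularWeight ω R) (hh : ContinuousOn h (Ico 0 R))
    (c : ℝ) : ContinuousOn (neumannSeries ω h c) (Ico 0 R) := by
  intro x hx
  obtain ⟨b, hxb, hbR⟩ := exists_between hx.2
  obtain ⟨u, hu, hbound⟩ := hω.exists_summable_bound_pow_mul_iterate_volterra hh hbR |c|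
  have hIcc : ContinuousOn (neumannSeries ω h c) (Icc 0 b) :=
    continuousOn_tsum (fun n => ((hω.continuousOn_iterate_volterra hh n).mono
      (Icc_subset_Ico_right hbR)).const_mul _) hu (hbound c le_rfl)
  exact (hIcc x ⟨hx.1, hxb.le⟩).mono_of_mem_nhdsWithin (Icc_mem_nhdsWithin_Ico hxb)

lemma continuous_neumannSeries_param (hω : SingularWeight ω R) (hh : ContinuousOn h (Ico 0 R))
    (hx : x ∈ Ico 0 R) : Continuous fun c => neumannSeries ω h c x := by
  refine continuous_iff_continuousAt.2 fun c₀ => ?_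
  obtain ⟨u, hu, hbound⟩ :=
    hω.exists_summable_bound_pow_mul_iterate_volterra hh hx.2 (|c₀| + 1)
  have hball : ContinuousOn (fun c => neumannSeries ω h c x) {c | |c| < |c₀| + 1} :=
    continuousOn_tsum (fun n => by fun_prop) hu
      fun n c hc => hbound c (le_of_lt hc) n x ⟨hx.1, le_rfl⟩
  exact hball.continuousAt ((isOpen_lt continuous_abs continuous_const).mem_nhds
    (lt_add_one |c₀|))

lemma neumannSeries_eq (hω : SingularWeight ω R) (hh : ContinuousOn h (Ico 0 R)) (c : ℝ)
    (hx : x ∈ Ico 0 R) :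
    neumannSeries ω h c x = h x + c * volterra ω (neumannSeries ω h c) x := by
  obtain ⟨u, hu, hbound⟩ := hω.exists_summable_bound_pow_mul_iterate_volterra hh hx.2 |c|
  have hsummable : Summable fun n => c ^ n * (volterra ω)^[n] h x :=
    .of_norm_bounded hu fun n => hbound c le_rfl n x ⟨hx.1, le_rfl⟩
  have hvolterra : HasSum (fun n => c * volterra ω (fun s => c ^ n * (volterra ω)^[n] h s) x)
      (c * volterra ω (neumannSeries ω h c) x) :=
    (hω.hasSum_volterra (fun n => (hω.continuousOn_iterate_volterra hh n).const_mul (c ^ n)) hu hx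
      (hbound c le_rfl)).mul_left c
  have hshift : ∀ n, c * volterra ω (fun s => c ^ n * (volterra ω)^[n] h s) x =
      c ^ (n + 1) * (volterra ω)^[n + 1] h x := fun n => by
    rw [volterra_const_mul, Function.iterate_succ_apply', pow_succ', mul_assoc]
  simp only [hshift] at hvolterra
  rw [neumannSeries, hsummable.tsum_eq_zero_add, hvolterra.tsum_eq, pow_zero, one_mul,
    Function.iterate_zero, id]

lemma eqOn_zero_of_eq_mul_volterra (hω : SingularWeight ω R) (hf : ContinuousOn f (Ico 0 R))
    {c : ℝ} (hfix : ∀ x ∈ Ico 0 R, f x = c * volterra ω f x) : EqOn f 0 (Ico 0 R) := by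
  have hiterate : ∀ n : ℕ, ∀ x ∈ Ico 0 R, f x = c ^ n * (volterra ω)^[n] f x := by
    intro n
    induction n with
    | zero => simp
    | succ n ih =>
      intro x hx
      have hcongr : EqOn f (fun s => c ^ n * (volterra ω)^[n] f s) (uIcc 0 x) := fun s hs => by
        rw [uIcc_of_le hx.1] at hs
        exact ih s (Icc_subset_Ico_right hx.2 hs)
      rw [hfix x hx, volterra_congr hcongr, volterra_const_mul, Function.iterate_succ_apply',
        pow_succ', mul_assoc]
  intro x hx
  obtain ⟨u, hu, hbound⟩ := hω.exists_summable_bound_pow_mul_iterate_volterra hf hx.2 |c|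
  have hle : ∀ n, ‖f x‖ ≤ u n := fun n => by
    rw [hiterate n x hx]
    exact hbound c le_rfl n x ⟨hx.1, le_rfl⟩
  exact norm_le_zero_iff.1 (ge_of_tendsto' hu.tendsto_atTop_zero hle)

lemma eqOn_of_eq_add_mul_volterra (hω : SingularWeight ω R) (hf : ContinuousOn f (Ico 0 R))
    (hg : ContinuousOn g (Ico 0 R)) {c : ℝ}
    (hf_eq : ∀ x ∈ Ico 0 R, f x = h x + c * volterra ω f x)
    (hg_eq : ∀ x ∈ Ico 0 R, g x = h x + c * volterra ω g x) : EqOn f g (Ico 0 R) := by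
  have hzero : EqOn (f - g) 0 (Ico 0 R) :=
    hω.eqOn_zero_of_eq_mul_volterra (c := c) (hf.sub hg) fun x hx => by
      rw [hω.volterra_sub hf hg hx, Pi.sub_apply, hf_eq x hx, hg_eq x hx]
      ring
  exact fun x hx => sub_eq_zero.1 (hzero hx)

end SingularWeight

/-! ### The initial value problem -/

lemma neg_one_div_mul_integral_eq (ω f : ℝ → ℝ) (μ x : ℝ) :
    -(1 / ω x) * ∫ s in (0 : ℝ)..x, μ * ω s * f s = -μ * normalizedFlux ω f x := by
  simp only [normalizedFlux, mul_assoc, intervalIntegral.integral_const_mul]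
  ring

lemma PicardSol.continuousOn {ω φ φd : ℝ → ℝ} {μ : ℝ} (hφ : PicardSol ω μ φ φd) :
    ContinuousOn φ (Ico 0 1) :=
  fun x hx => (hφ.1 x hx).continuousWithinAt

lemma PicardSol.eq_one_add_volterra {ω φ φd : ℝ → ℝ} {μ x : ℝ} (hφ : PicardSol ω μ φ φd)
    (hx : x ∈ Ico (0 : ℝ) 1) : φ x = 1 + -μ * volterra ω φ x := by
  obtain ⟨-, -, hφ0, hφd0, hint⟩ := hφ
  have hφd : EqOn φd (fun t => -μ * normalizedFlux ω φ t) (Ico 0 1) := fun t ht => by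
    rcases ht.1.eq_or_lt with rfl | ht0
    · simp [hφd0]
    · exact (hint t ⟨ht0, ht.2⟩).2.trans (neg_one_div_mul_integral_eq ω φ μ t)
  rcases hx.1.eq_or_lt with rfl | hx0
  · simp [hφ0]
  have hsub : uIcc 0 x ⊆ Ico 0 1 := by
    rw [uIcc_of_le hx.1]
    exact Icc_subset_Ico_right hx.2
  rw [(hint x ⟨hx0, hx.2⟩).1, intervalIntegral.integral_congr (hφd.mono hsub),
    intervalIntegral.integral_const_mul, volterra]

lemma SingularWeight.picardSol {ω φ : ℝ → ℝ} {μ : ℝ} (hω : SingularWeight ω 1)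
    (hφ : ContinuousOn φ (Ico 0 1))
    (hφ_eq : ∀ x ∈ Ico (0 : ℝ) 1, φ x = 1 + -μ * volterra ω φ x) :
    PicardSol ω μ φ fun x => -μ * normalizedFlux ω φ x := by
  refine ⟨fun x hx => ?_, (hω.continuousOn_normalizedFlux hφ).const_mul (-μ), ?_, by simp,
    fun x hx => ⟨?_, (neg_one_div_mul_integral_eq ω φ μ x).symm⟩⟩
  · exact (((hω.hasDerivWithinAt_volterra hφ hx).const_mul (-μ)).const_add 1).congr hφ_eq
      (hφ_eq x hx)
  · simpa using hφ_eq 0 ⟨le_rfl, one_pos⟩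
  · rw [hφ_eq x (Ioo_subset_Ico_self hx), intervalIntegral.integral_const_mul, volterra]

theorem singular_ode_well_posed_general (ω : ℝ → ℝ) (hω : SingularWeight ω 1) :
    ∃ Φ Φd : ℝ → ℝ → ℝ,
      (∀ μ : ℝ, PicardSol ω μ (Φ μ) (Φd μ) ∧
        ∀ ψ ψd : ℝ → ℝ, PicardSol ω μ ψ ψd → ∀ x ∈ Ico (0 : ℝ) 1, ψ x = Φ μ x) ∧
      ∀ x ∈ Ico (0 : ℝ) 1, Continuous fun μ => Φ μ x := by
  let Φ : ℝ → ℝ → ℝ := fun μ => neumannSeries ω 1 (-μ)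
  have hone : ContinuousOn (1 : ℝ → ℝ) (Ico 0 1) := continuousOn_const
  have hΦ (μ : ℝ) : ContinuousOn (Φ μ) (Ico 0 1) := hω.continuousOn_neumannSeries hone (-μ)
  have hΦ_eq (μ : ℝ) : ∀ x ∈ Ico (0 : ℝ) 1, Φ μ x = 1 + -μ * volterra ω (Φ μ) x :=
    fun x hx => hω.neumannSeries_eq hone (-μ) hx
  refine ⟨Φ, fun μ x => -μ * normalizedFlux ω (Φ μ) x, fun μ => ⟨?_, fun ψ ψd hψ => ?_⟩,
    fun x hx => ?_⟩
  · exact hω.picardSol (hΦ μ) (hΦ_eq μ)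
  · exact hω.eqOn_of_eq_add_mul_volterra hψ.continuousOn (hΦ μ)
      (fun x hx => hψ.eq_one_add_volterra hx) (hΦ_eq μ)
  · exact (hω.continuous_neumannSeries_param hone hx).comp continuous_neg

/-- Existence, uniqueness, and continuous dependence on `μ` for the
possibly-singular initial value problem `-(ωφ')' = μωφ`, `φ(0) = 1`, `φ'(0) = 0`. -/
theorem singular_ode_well_posed
    (ω : ℝ → ℝ)
    (hωc : ContinuousOn ω (Icc 0 1))
    (hωpos : ∀ x ∈ Ioo (0:ℝ) 1, 0 < ω x)
    (hω0 : 0 < ω 0 ∨ (ω 0 = 0 ∧ ∃ δ > 0, MonotoneOn ω (Icc 0 δ))) :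
    ∃ Φ Φd : ℝ → ℝ → ℝ,
      (∀ μ : ℝ, 0 < μ →
        PicardSol ω μ (Φ μ) (Φd μ) ∧
        ∀ ψ ψd : ℝ → ℝ, PicardSol ω μ ψ ψd → ∀ x ∈ Ico (0:ℝ) 1, ψ x = Φ μ x) ∧
      (∀ x ∈ Ico (0:ℝ) 1, ContinuousOn (fun μ => Φ μ x) (Ioi 0)) := by
  obtain ⟨Φ, Φd, hsol, hcont⟩ :=
    singular_ode_well_posed_general ω (.of_continuousOn_Icc hωc hωpos hω0)
  exact ⟨Φ, Φd, fun μ _ => hsol μ, fun x hx => (hcont x hx).continuousOn⟩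
end
end
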